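/- Let R be a basic left Harada algebra with idempotent data {e_{ij}} (1 ≤ i ≤ m, 1 ≤ j ≤ n_i) as below. Then the number of isomorphism classes of basic tilting right R-modules is finite and equals the product over i = 1,…,m of the Catalan numbers (1/(n_i+1))·binomial(2n_i, n_i). -/

import Mathlib

/-!
Common setup.  `K` is an algebraically closed field and `R` a finite-dimensional associative
unital `K`-algebra.  Right `R`-modules are formalized as modules over the opposite ring `Rᵐᵒᵖ`
(so that `MulOpposite.op r • x = x * r`).
-/

open MulOpposite

/-- The right ideal `xR` of a ring `R`, as a submodule of `R` over `Rᵐᵒᵖ`. -/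
def rightIdeal (R : Type) [Ring R] (x : R) : Submodule Rᵐᵒᵖ R :=
  Submodule.span Rᵐᵒᵖ {x}

/-- The Jacobson radical of a submodule `N` (the intersection of the maximal submodules of the
module `N`), viewed as a submodule of the ambient module.  Iterating this operation gives the
iterated radicals `rad^k`. -/
def radSub {A M : Type} [Ring A] [AddCommGroup M] [Module A M] (N : Submodule A M) :
    Submodule A M :=
  Submodule.map N.subtype (sInf {P : Submodule A ↥N | IsCoatom P})

/-- A module is indecomposable if it is nonzero and admits no nontrivial direct sum
decomposition. -/
def IsIndecomposableMod (A M : Type) [Ring A] [AddCommGroup M] [Module A M] : Prop :=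
  Nontrivial M ∧ ∀ N N' : Submodule A M, IsCompl N N' → N = ⊥ ∨ N' = ⊥

/-- A module has projective dimension at most one iff it admits a surjection from a projective
module with projective kernel. -/
def PdLeOne (A : Type) [Ring A] (M : Type) [AddCommGroup M] [Module A M] : Prop :=
  ∃ (P : ModuleCat.{0} A) (f : ↥P →ₗ[A] M),
    Module.Projective A ↥P ∧ Function.Surjective f ∧
      Module.Projective A ↥(LinearMap.ker f)

/-- `Ext¹_A(M,N) = 0`, expressed by the splitting of every short exact sequence
`0 → N → E → M → 0`. -/
def Ext1Zero (A : Type) [Ring A] (M N : Type) [AddCommGroup M] [Module A M]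
    [AddCommGroup N] [Module A N] : Prop :=
  ∀ (E : ModuleCat.{0} A) (i : N →ₗ[A] ↥E) (p : ↥E →ₗ[A] M),
    Function.Injective i → Function.Surjective p → LinearMap.range i = LinearMap.ker p →
    ∃ s : M →ₗ[A] ↥E, p.comp s = LinearMap.id

/-- `X ∈ add T` : `X` is a direct summand of a finite direct sum of copies of `T`. -/
def InAdd (A : Type) [Ring A] (T X : Type) [AddCommGroup T] [Module A T]
    [AddCommGroup X] [Module A X] : Prop :=
  ∃ (k : ℕ) (f : X →ₗ[A] (Fin k → T)) (g : (Fin k → T) →ₗ[A] X),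
    g.comp f = LinearMap.id

/-- `T` is a (finitely generated) tilting right `R`-module: projective dimension at most one,
no self-extensions, and there is a short exact sequence `0 → R → T₀ → T₁ → 0` with
`T₀, T₁ ∈ add T`. -/
def IsTiltingRight (R : Type) [Ring R] (T : Type) [AddCommGroup T] [Module Rᵐᵒᵖ T] : Prop :=
  Module.Finite Rᵐᵒᵖ T ∧ PdLeOne Rᵐᵒᵖ T ∧ Ext1Zero Rᵐᵒᵖ T T ∧
    ∃ (T₀ T₁ : ModuleCat.{0} Rᵐᵒᵖ) (f : R →ₗ[Rᵐᵒᵖ] ↥T₀) (g : ↥T₀ →ₗ[Rᵐᵒᵖ] ↥T₁),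
      InAdd Rᵐᵒᵖ T ↥T₀ ∧ InAdd Rᵐᵒᵖ T ↥T₁ ∧
        Function.Injective f ∧ Function.Surjective g ∧ LinearMap.range f = LinearMap.ker g

/-- `T` is basic: it is an (internal) direct sum of pairwise non-isomorphic indecomposable
submodules. -/
def IsBasicMod (A : Type) [Ring A] (T : Type) [AddCommGroup T] [Module A T] : Prop :=
  ∃ (k : ℕ) (N : Fin k → Submodule A T),
    DirectSum.IsInternal N ∧ (∀ a, IsIndecomposableMod A ↥(N a)) ∧
      ∀ a b, a ≠ b → IsEmpty (↥(N a) ≃ₗ[A] ↥(N b))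

/-- The setoid identifying isomorphic modules (among those with property `P`). -/
def isoSetoid (A : Type) [Ring A] (P : ModuleCat.{0} A → Prop) :
    Setoid {M : ModuleCat.{0} A // P M} where
  r M N := Nonempty (↥M.1 ≃ₗ[A] ↥N.1)
  iseqv := ⟨fun M => ⟨LinearEquiv.refl A ↥M.1⟩, fun ⟨e⟩ => ⟨e.symm⟩,
    fun ⟨e⟩ ⟨f⟩ => ⟨e.trans f⟩⟩

/-- The data exhibiting a ring `R` as a basic left Harada algebra:
a complete set `{e i j}` of orthogonal primitive idempotents with pairwise non-isomorphic
right ideals `(e i j)R` (`R` is basic), such that each `(e i 0)R` is an injective right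
module, and `(e i j)R ≅ rad ((e i (j-1))R)` for `j ≥ 1`.  (Indices are shifted by one from
the paper: the paper's `e_{ij}` is `e i (j-1)` here.) -/
structure HaradaData (R : Type) [Ring R] : Type where
  m : ℕ
  hm : 0 < m
  n : Fin m → ℕ
  hn : ∀ i, 0 < n i
  e : (i : Fin m) → Fin (n i) → R
  idem : ∀ i j, IsIdempotentElem (e i j)
  orth : ∀ p q : Σ i : Fin m, Fin (n i), p ≠ q → e p.1 p.2 * e q.1 q.2 = 0
  sum_eq_one : ∑ p : Σ i : Fin m, Fin (n i), e p.1 p.2 = 1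
  indec : ∀ i j, IsIndecomposableMod Rᵐᵒᵖ ↥(rightIdeal R (e i j))
  basic : ∀ p q : Σ i : Fin m, Fin (n i), p ≠ q →
    IsEmpty (↥(rightIdeal R (e p.1 p.2)) ≃ₗ[Rᵐᵒᵖ] ↥(rightIdeal R (e q.1 q.2)))
  inj : ∀ i, Module.Injective Rᵐᵒᵖ ↥(rightIdeal R (e i ⟨0, hn i⟩))
  rad_iso : ∀ (i : Fin m) (j : Fin (n i)), 0 < j.val →
    Nonempty (↥(rightIdeal R (e i j)) ≃ₗ[Rᵐᵒᵖ]
      ↥(radSub (rightIdeal R (e i ⟨j.val - 1, Nat.lt_of_le_of_lt (Nat.sub_le j.val 1) j.isLt⟩))))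

variable {R : Type} [Ring R]

/-- `H.P i j = rad^j ((e i 0)R)`; this is the paper's `P_{i,j+1} = rad^j (e_{i1}R)`,
a submodule of `R`. -/
def HaradaData.P (H : HaradaData R) (i : Fin H.m) (j : Fin (H.n i)) : Submodule Rᵐᵒᵖ R :=
  radSub^[j.val] (rightIdeal R (H.e i ⟨0, H.hn i⟩))

/-- The quotient module `P_{ik}/P_{il}` (for `l ≥ k` we have `H.P i l ≤ H.P i k`). -/
abbrev HaradaData.Quot (H : HaradaData R) (i : Fin H.m) (k l : Fin (H.n i)) : Type :=
  ↥(H.P i k) ⧸ Submodule.comap (H.P i k).subtype (H.P i l)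

/-- The last index (the paper's `n_i`) in `Fin (H.n i)`. -/
def HaradaData.last (H : HaradaData R) (i : Fin H.m) : Fin (H.n i) :=
  ⟨H.n i - 1, Nat.sub_lt (H.hn i) one_pos⟩

/-- The right ideal `I = ⊕_{i,j} rad^{n_i - j + 1}(e_{ij}R)` of the paper. -/
def HaradaData.I (H : HaradaData R) : Submodule Rᵐᵒᵖ R :=
  ⨆ p : Σ i : Fin H.m, Fin (H.n i),
    radSub^[H.n p.1 - p.2.val] (rightIdeal R (H.e p.1 p.2))

/-- The submodule `T·I` of a right module `T`, for `I` a right ideal of `R`. -/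
def smulSub (I : Submodule Rᵐᵒᵖ R) (T : Type) [AddCommGroup T] [Module Rᵐᵒᵖ T] :
    Submodule Rᵐᵒᵖ T :=
  Submodule.span Rᵐᵒᵖ {x : T | ∃ (t : T) (r : R), r ∈ I ∧ x = op r • t}

/-!
Indecomposable modules of projective dimension at most one are the subquotients `P k / P l` of the
radical chains `P 0 > P 1 > ⋯ > P (n - 1)` of the injective projectives `P 0 = e_{i1}R`, continued
by `P n = 0`: a homomorphism between two such injectives either is an isomorphism or maps into
every nonzero member of the chain. They thus correspond to intervals `(k, l)` with `k < l ≤ n`, and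
`Ext¹(P k / P l, P k' / P l')` vanishes unless both come from the same chain and
`k < k' ≤ l < l'`. So a basic module of projective dimension at most one without self-extensions is
a noncrossing set of intervals, and it is tilting exactly when this set is maximal. The maximal
noncrossing sets of intervals of a chain of length `n` are read off from the binary trees with `n`
nodes, a node being sent to the set of positions in its subtree; the tree structure also builds the
coresolution of `R` by pullback squares.
-/

section HomologicalAlgebra

open LinearMap

variable {A : Type} [Ring A]
  {B M N N' P Q T U V W X Y : Type}
  [AddCommGroup B] [Module A B] [AddCommGroup M] [Module A M] [AddCommGroup N] [Module A N]
  [AddCommGroup N'] [Module A N'] [AddCommGroup P] [Module A P] [AddCommGroup Q] [Module A Q]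
  [AddCommGroup T] [Module A T] [AddCommGroup U] [Module A U] [AddCommGroup V] [Module A V]
  [AddCommGroup W] [Module A W] [AddCommGroup X] [Module A X] [AddCommGroup Y] [Module A Y]

theorem exists_comp_eq_of_injective {i : N →ₗ[A] V} (hi : Function.Injective i) {f : U →ₗ[A] V}
    (hf : range f ≤ range i) : ∃ g : U →ₗ[A] N, i ∘ₗ g = f := by
  have hmem (u : U) : f u ∈ range i := hf (mem_range_self f u)
  refine ⟨(LinearEquiv.ofInjective i hi).symm.toLinearMap ∘ₗ f.codRestrict _ hmem, ?_⟩
  ext u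
  exact congrArg Subtype.val
    ((LinearEquiv.ofInjective i hi).apply_symm_apply (f.codRestrict _ hmem u))

theorem exists_comp_eq_of_surjective {q : U →ₗ[A] M} (hq : Function.Surjective q) {f : U →ₗ[A] V}
    (hf : ker q ≤ ker f) : ∃ g : M →ₗ[A] V, g ∘ₗ q = f := by
  refine ⟨(ker q).liftQ f hf ∘ₗ (q.quotKerEquivOfSurjective hq).symm.toLinearMap, ?_⟩
  ext u
  have : (q.quotKerEquivOfSurjective hq).symm (q u) = (ker q).mkQ u := by
    rw [LinearEquiv.symm_apply_eq]
    rfl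
  simp [this]

namespace Ext1Zero

theorem exists_section (h : Ext1Zero A M N) {i : N →ₗ[A] V} {p : V →ₗ[A] M}
    (hi : Function.Injective i) (hp : Function.Surjective p) (hip : Function.Exact i p) :
    ∃ s : M →ₗ[A] V, p ∘ₗ s = LinearMap.id :=
  h (ModuleCat.of A V) i p hi hp hip.linearMap_ker_eq.symm

theorem exists_retraction (h : Ext1Zero A M N) {i : N →ₗ[A] V} {p : V →ₗ[A] M}
    (hi : Function.Injective i) (hp : Function.Surjective p) (hip : Function.Exact i p) :
    ∃ r : V →ₗ[A] N, r ∘ₗ i = LinearMap.id :=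
  ((hip.split_tfae hi hp).out 0 1).mp (h.exists_section hi hp hip)

theorem exists_lift (h : Ext1Zero A M N) {i : N →ₗ[A] V} {p : V →ₗ[A] W}
    (hi : Function.Injective i) (hp : Function.Surjective p) (hip : Function.Exact i p)
    (a : M →ₗ[A] W) : ∃ s : M →ₗ[A] V, p ∘ₗ s = a := by
  -- the pullback of the sequence along `a` splits
  let E : Submodule A (V × M) := eqLocus (p ∘ₗ fst A V M) (a ∘ₗ snd A V M)
  let j : N →ₗ[A] E := (inl A V M ∘ₗ i).codRestrict E fun n => by
    simp [E, hip.apply_apply_eq_zero]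
  let q : E →ₗ[A] M := snd A V M ∘ₗ E.subtype
  have hj : Function.Injective j := fun x y hxy => hi (congrArg (fun z : E => z.1.1) hxy)
  have hq : Function.Surjective q := fun m =>
    let ⟨v, hv⟩ := hp (a m)
    ⟨⟨(v, m), hv⟩, rfl⟩
  have hjq : Function.Exact j q := by
    rintro ⟨⟨v, m⟩, hvm : p v = a m⟩
    constructor
    · rintro rfl
      obtain ⟨n, rfl⟩ := (hip v).mp (by rw [hvm]; exact map_zero a)
      exact ⟨n, rfl⟩
    · rintro ⟨n, hn⟩
      exact congrArg (fun z : E => z.1.2) hn.symm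
  obtain ⟨s, hs⟩ := h.exists_section hj hq hjq
  refine ⟨fst A V M ∘ₗ E.subtype ∘ₗ s, LinearMap.ext fun m => ?_⟩
  calc p (s m).1.1 = a (s m).1.2 := (s m).2
    _ = a m := congrArg a (LinearMap.congr_fun hs m)

theorem exists_extend (h : Ext1Zero A M N) {i : U →ₗ[A] V} {p : V →ₗ[A] M}
    (hi : Function.Injective i) (hp : Function.Surjective p) (hip : Function.Exact i p)
    (a : U →ₗ[A] N) : ∃ b : V →ₗ[A] N, b ∘ₗ i = a := by
  -- the pushout of the sequence along `a` splits
  let D : Submodule A (V × N) := range (i.prod (-a))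
  let j : N →ₗ[A] (V × N) ⧸ D := D.mkQ ∘ₗ inr A V N
  let q : (V × N) ⧸ D →ₗ[A] M := D.liftQ (p ∘ₗ fst A V N) <| by
    rintro _ ⟨u, rfl⟩
    exact hip.apply_apply_eq_zero u
  have hglue (u : U) : j (a u) = D.mkQ (i u, 0) :=
    ((Submodule.Quotient.eq D).mpr ⟨u, by simp⟩).symm
  have hj : Function.Injective j := by
    rw [injective_iff_map_eq_zero]
    intro n hn
    obtain ⟨u, hu⟩ := (Submodule.Quotient.mk_eq_zero D).mp hn
    obtain ⟨hu0, hun⟩ : i u = 0 ∧ -a u = n := Prod.ext_iff.mp hu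
    rw [← hun, (map_eq_zero_iff i hi).mp hu0, map_zero, neg_zero]
  have hq : Function.Surjective q := fun m =>
    let ⟨v, hv⟩ := hp m
    ⟨D.mkQ (v, 0), hv⟩
  have hjq : Function.Exact j q := by
    intro e
    obtain ⟨⟨v, n⟩, rfl⟩ := D.mkQ_surjective e
    refine ⟨fun hv => ?_, ?_⟩
    · obtain ⟨u, rfl⟩ := (hip v).mp hv
      refine ⟨a u + n, ?_⟩
      rw [map_add, hglue, show j n = D.mkQ (0, n) from rfl, ← map_add]
      simp
    · rintro ⟨n', hn'⟩
      rw [← hn']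
      exact map_zero p
  obtain ⟨r, hr⟩ := h.exists_retraction hj hq hjq
  refine ⟨r ∘ₗ D.mkQ ∘ₗ inl A V N, LinearMap.ext fun u => ?_⟩
  calc r (D.mkQ (i u, 0)) = r (j (a u)) := by rw [hglue]
    _ = a u := LinearMap.congr_fun hr (a u)

theorem of_exists_extend [Module.Projective A P] {u : U →ₗ[A] P} {p : P →ₗ[A] M}
    (hp : Function.Surjective p) (hup : Function.Exact u p)
    (h : ∀ f : U →ₗ[A] N, ∃ g : P →ₗ[A] N, g ∘ₗ u = f) : Ext1Zero A M N := by
  intro E i q hi hq hiq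
  obtain ⟨σ, hσ⟩ := Module.projective_lifting_property q p hq
  obtain ⟨f, hf⟩ := exists_comp_eq_of_injective hi (f := σ ∘ₗ u) <| by
    rw [hiq]
    rintro _ ⟨x, rfl⟩
    exact (LinearMap.congr_fun hσ (u x)).trans (hup.apply_apply_eq_zero x)
  obtain ⟨g, rfl⟩ := h f
  obtain ⟨s, hs⟩ := exists_comp_eq_of_surjective hp (f := σ - i ∘ₗ g) <| by
    rw [hup.linearMap_ker_eq]
    rintro _ ⟨x, rfl⟩
    exact sub_eq_zero.mpr (LinearMap.congr_fun hf x).symm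
  refine ⟨s, (cancel_right hp).mp ?_⟩
  have hqi : q ∘ₗ i = 0 := range_le_ker_iff.mp hiq.le
  calc (q ∘ₗ s) ∘ₗ p = q ∘ₗ σ - (q ∘ₗ i) ∘ₗ g := by rw [comp_assoc, hs, comp_sub, comp_assoc]
    _ = LinearMap.id ∘ₗ p := by rw [hσ, hqi, zero_comp, sub_zero, id_comp]

theorem exists_extend_ker (h : Ext1Zero A M N) {p : P →ₗ[A] M} (hp : Function.Surjective p)
    (f : ker p →ₗ[A] N) : ∃ g : P →ₗ[A] N, g ∘ₗ (ker p).subtype = f :=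
  h.exists_extend (Subtype.val_injective) hp (exact_subtype_ker_map p) f

theorem of_split_left (h : Ext1Zero A M N) (a : X →ₗ[A] M) (b : M →ₗ[A] X)
    (hba : b ∘ₗ a = LinearMap.id) : Ext1Zero A X N := by
  intro E i p hi hp hip
  obtain ⟨s, hs⟩ := h.exists_lift hi hp (exact_iff.mpr hip.symm) b
  exact ⟨s ∘ₗ a, by rw [← hba, ← hs]; rfl⟩

theorem of_split_right (h : Ext1Zero A M N) (a : X →ₗ[A] N) (b : N →ₗ[A] X)
    (hba : b ∘ₗ a = LinearMap.id) : Ext1Zero A M X := by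
  have hM := Finsupp.linearCombination_id_surjective A M
  refine of_exists_extend hM (exact_subtype_ker_map _) fun f => ?_
  obtain ⟨g, hg⟩ := h.exists_extend_ker hM (a ∘ₗ f)
  exact ⟨b ∘ₗ g, by rw [comp_assoc, hg, ← comp_assoc, hba, id_comp]⟩

theorem pi_left {α : Type} [Finite α] {M : α → Type} [∀ a, AddCommGroup (M a)]
    [∀ a, Module A (M a)] (h : ∀ a, Ext1Zero A (M a) N) : Ext1Zero A (∀ a, M a) N := by
  classical
  have := Fintype.ofFinite α
  intro E i p hi hp hip
  choose s hs using fun a =>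
    (h a).exists_lift hi hp (exact_iff.mpr hip.symm) (LinearMap.single A M a)
  refine ⟨∑ a, s a ∘ₗ proj a, ?_⟩
  have hps (a : α) (x : M a) : p (s a x) = LinearMap.single A M a x := LinearMap.congr_fun (hs a) x
  refine LinearMap.ext fun x => ?_
  simp only [comp_apply, LinearMap.sum_apply, map_sum, proj_apply, hps]
  exact sum_single_apply M x

theorem pi_right {α : Type} {N : α → Type} [∀ a, AddCommGroup (N a)]
    [∀ a, Module A (N a)] (h : ∀ a, Ext1Zero A M (N a)) : Ext1Zero A M (∀ a, N a) := by
  have hM := Finsupp.linearCombination_id_surjective A M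
  refine of_exists_extend hM (exact_subtype_ker_map _) fun f => ?_
  choose g hg using fun a => (h a).exists_extend_ker hM (proj a ∘ₗ f)
  exact ⟨LinearMap.pi g, LinearMap.ext fun x => funext fun a => LinearMap.congr_fun (hg a) x⟩

theorem of_subsingleton_right [Subsingleton N] : Ext1Zero A M N :=
  of_exists_extend (Finsupp.linearCombination_id_surjective A M) (exact_subtype_ker_map _) fun _ =>
    ⟨0, LinearMap.ext fun _ => Subsingleton.elim _ _⟩

end Ext1Zero

theorem exists_finset_support_subset [Module.Finite A M] {J : Type} (f : M →ₗ[A] J →₀ N) :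
    ∃ s : Finset J, ∀ x, (f x).support ⊆ s := by
  classical
  obtain ⟨t, ht⟩ := Module.Finite.fg_top (R := A) (M := M)
  refine ⟨t.biUnion fun x => (f x).support, fun x => ?_⟩
  have hspan : Submodule.span A (t : Set M) ≤
      (Finsupp.supported N A (t.biUnion fun x => (f x).support : Finset J)).comap f :=
    Submodule.span_le.mpr fun y hy =>
      Finset.coe_subset.mpr (Finset.subset_biUnion_of_mem (fun x => (f x).support) hy)
  exact Finset.coe_subset.mp (hspan (ht ▸ Submodule.mem_top))

theorem sum_single_eq_of_support_subset {J : Type} {s : Finset J} {x : J →₀ N}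
    (h : x.support ⊆ s) : ∑ j ∈ s, Finsupp.single j (x j) = x := by
  conv_rhs => rw [← Finsupp.sum_single x]
  rw [Finsupp.sum_of_support_subset _ h _ (by simp)]

theorem Ext1Zero.finsupp_right [IsNoetherianRing A] [Module.Finite A M] (h : Ext1Zero A M N)
    (J : Type) : Ext1Zero A M (J →₀ N) := by
  obtain ⟨k, p, hp⟩ := Module.Finite.exists_fin' A M
  refine of_exists_extend hp (exact_subtype_ker_map _) fun f => ?_
  obtain ⟨s, hs⟩ := exists_finset_support_subset f
  choose g hg using fun j => h.exists_extend_ker hp (Finsupp.lapply j ∘ₗ f)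
  refine ⟨∑ j ∈ s, Finsupp.lsingle j ∘ₗ g j, LinearMap.ext fun x => ?_⟩
  have hgx (j : J) : g j x = f x j := LinearMap.congr_fun (hg j) x
  simpa [LinearMap.sum_apply, hgx] using sum_single_eq_of_support_subset (hs x)

theorem projective_pi {α : Type} [Finite α] {P : α → Type} [∀ a, AddCommGroup (P a)]
    [∀ a, Module A (P a)] (h : ∀ a, Module.Projective A (P a)) :
    Module.Projective A (∀ a, P a) := by
  classical
  have := Fintype.ofFinite α
  exact Module.Projective.of_equiv' (DFinsupp.linearEquivFunOnFintype (R := A))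

namespace PdLeOne

/-- Schanuel's lemma. -/
theorem projective_ker (h : PdLeOne A M) [Module.Projective A P] {p : P →ₗ[A] M}
    (hp : Function.Surjective p) : Module.Projective A (ker p) := by
  obtain ⟨Q, q, _, hq, _⟩ := h
  obtain ⟨σ, hσ⟩ := Module.projective_lifting_property q p hq
  obtain ⟨τ, hτ⟩ := Module.projective_lifting_property p q hp
  have hqσ (x : P) : q (σ x) = p x := LinearMap.congr_fun hσ x
  have hpτ (y : Q) : p (τ y) = q y := LinearMap.congr_fun hτ y
  let a : ker p →ₗ[A] P × ker q :=
    (ker p).subtype.prod <| (σ ∘ₗ (ker p).subtype).codRestrict (ker q) fun x => by simp [hqσ]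
  let b : P × ker q →ₗ[A] ker p :=
    ((LinearMap.id - τ ∘ₗ σ).coprod (τ ∘ₗ (ker q).subtype)).codRestrict (ker p) fun x => by
      simp [hpτ, hqσ]
  refine Module.Projective.of_split a b (LinearMap.ext fun x => Subtype.ext ?_)
  exact sub_add_cancel (x : P) (τ (σ x))

theorem of_split (h : PdLeOne A M) (a : X →ₗ[A] M) (b : M →ₗ[A] X)
    (hba : b ∘ₗ a = LinearMap.id) : PdLeOne A X := by
  have hba' (x : X) : b (a x) = x := LinearMap.congr_fun hba x
  let p := Finsupp.linearCombination A (_root_.id : X → X)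
  let p' := Finsupp.linearCombination A (_root_.id : ker b → ker b)
  have hp : Function.Surjective p := Finsupp.linearCombination_id_surjective A X
  have hp' : Function.Surjective p' := Finsupp.linearCombination_id_surjective A (ker b)
  let q := (a ∘ₗ p).coprod ((ker b).subtype ∘ₗ p')
  have hq : Function.Surjective q := by
    intro m
    obtain ⟨x, hx⟩ := hp (b m)
    obtain ⟨y, hy⟩ := hp' ⟨m - a (b m), by simp [hba']⟩
    exact ⟨(x, y), by simp [q, hx, hy]⟩
  have := h.projective_ker hq
  refine ⟨ModuleCat.of A (X →₀ A), p, inferInstanceAs (Module.Projective A (X →₀ A)), hp, ?_⟩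
  have hbq (y : (X →₀ A) × (ker b →₀ A)) : b (q y) = p y.1 := by simp [q, hba']
  exact Module.Projective.of_split (M := ker q)
    ((inl A _ _ ∘ₗ (ker p).subtype).codRestrict (ker q) fun x => by simp [q])
    ((fst A _ _ ∘ₗ (ker q).subtype).codRestrict (ker p) fun z =>
      (hbq z).symm.trans (by rw [map_coe_ker, map_zero]))
    (LinearMap.ext fun _ => rfl)

theorem pi {α : Type} [Finite α] {M : α → Type} [∀ a, AddCommGroup (M a)]
    [∀ a, Module A (M a)] (h : ∀ a, PdLeOne A (M a)) : PdLeOne A (∀ a, M a) := by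
  choose P p hP hp hker using h
  refine ⟨ModuleCat.of A (∀ a, P a), piMap p, projective_pi hP, Function.Surjective.piMap hp, ?_⟩
  have := projective_pi hker
  exact Module.Projective.of_split
    (LinearMap.pi fun a => (proj a ∘ₗ (ker (piMap p)).subtype).codRestrict (ker (p a)) fun x =>
      congrFun x.2 a)
    ((piMap fun a => (ker (p a)).subtype).codRestrict (ker (piMap p)) fun x =>
      funext fun a => (x a).2)
    (LinearMap.ext fun _ => rfl)

end PdLeOne

theorem Ext1Zero.of_surjective_right (h : Ext1Zero A M N) (hM : PdLeOne A M) {q : N →ₗ[A] N'}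
    (hq : Function.Surjective q) : Ext1Zero A M N' := by
  obtain ⟨P, p, _, hp, _⟩ := hM
  refine of_exists_extend hp (exact_subtype_ker_map _) fun f => ?_
  obtain ⟨f', rfl⟩ := Module.projective_lifting_property q f hq
  obtain ⟨g, rfl⟩ := h.exists_extend_ker hp f'
  exact ⟨q ∘ₗ g, rfl⟩

namespace InAdd

theorem of_split (h : InAdd A T X) (a : Y →ₗ[A] X) (b : X →ₗ[A] Y) (hba : b ∘ₗ a = LinearMap.id) :
    InAdd A T Y := by
  obtain ⟨k, f, g, hgf⟩ := h
  refine ⟨k, f ∘ₗ a, b ∘ₗ g, ?_⟩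
  calc (b ∘ₗ g) ∘ₗ f ∘ₗ a = b ∘ₗ (g ∘ₗ f) ∘ₗ a := rfl
    _ = LinearMap.id := by rw [hgf, id_comp, hba]

theorem congr (h : InAdd A T X) (e : X ≃ₗ[A] Y) : InAdd A T Y :=
  h.of_split e.symm.toLinearMap e.toLinearMap e.comp_symm

theorem fun_const (α : Type) [Finite α] : InAdd A T (α → T) := by
  obtain ⟨k, ⟨e⟩⟩ := Finite.exists_equiv_fin α
  exact ⟨k, LinearMap.funLeft A T e.symm, LinearMap.funLeft A T e, by ext; simp⟩

theorem self : InAdd A T T :=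
  (fun_const (Fin 1)).congr (LinearEquiv.funUnique (Fin 1) A T)

theorem of_subsingleton [Subsingleton X] : InAdd A T X :=
  ⟨0, 0, 0, LinearMap.ext fun _ => Subsingleton.elim _ _⟩

theorem pi {α : Type} [Finite α] {X : α → Type} [∀ a, AddCommGroup (X a)] [∀ a, Module A (X a)]
    (h : ∀ a, InAdd A T (X a)) : InAdd A T (∀ a, X a) := by
  choose k f g hgf using h
  refine (fun_const (Σ a, Fin (k a))).of_split
    (LinearMap.pi fun p => proj p.2 ∘ₗ f p.1 ∘ₗ proj p.1)
    (LinearMap.pi fun a => g a ∘ₗ LinearMap.pi fun j => proj ⟨a, j⟩) ?_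
  exact LinearMap.ext fun x => funext fun a => LinearMap.congr_fun (hgf a) (x a)

theorem prod (hX : InAdd A T X) (hY : InAdd A T Y) : InAdd A T (X × Y) := by
  obtain ⟨k, f, g, hgf⟩ := hX
  obtain ⟨k', f', g', hgf'⟩ := hY
  refine (fun_const (Fin k ⊕ Fin k')).of_split
    (LinearMap.pi (Sum.elim (fun j => proj j ∘ₗ f ∘ₗ fst A X Y)
      fun j => proj j ∘ₗ f' ∘ₗ snd A X Y))
    ((g ∘ₗ LinearMap.pi fun j => proj (Sum.inl j)).prod
      (g' ∘ₗ LinearMap.pi fun j => proj (Sum.inr j))) ?_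
  exact LinearMap.ext fun x =>
    Prod.ext (LinearMap.congr_fun hgf x.1) (LinearMap.congr_fun hgf' x.2)

theorem trans (hX : InAdd A T X) (hY : InAdd A X Y) : InAdd A T Y := by
  obtain ⟨k, f, g, hgf⟩ := hY
  exact (pi fun _ : Fin k => hX).of_split f g hgf

end InAdd

theorem Ext1Zero.of_inAdd_left (h : Ext1Zero A T N) (hX : InAdd A T X) : Ext1Zero A X N := by
  obtain ⟨k, f, g, hgf⟩ := hX
  exact (pi_left fun _ : Fin k => h).of_split_left f g hgf

/-- `B` is coresolved by `add T`: there is an exact sequence `0 → B → T₀ → T₁ → 0` with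
`T₀, T₁ ∈ add T`. This is the last condition in the definition of a tilting module, stated for an
arbitrary module in place of the regular one. -/
def HasAddCoresolution (A T B : Type) [Ring A] [AddCommGroup T] [Module A T] [AddCommGroup B]
    [Module A B] : Prop :=
  ∃ (T₀ T₁ : ModuleCat.{0} A) (f : B →ₗ[A] ↥T₀) (g : ↥T₀ →ₗ[A] ↥T₁),
    InAdd A T ↥T₀ ∧ InAdd A T ↥T₁ ∧
      Function.Injective f ∧ Function.Surjective g ∧ LinearMap.range f = LinearMap.ker g

namespace HasAddCoresolution

theorem of_inAdd (h : InAdd A T B) : HasAddCoresolution A T B :=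
  ⟨ModuleCat.of A B, ModuleCat.of A PUnit, LinearMap.id, 0, h, InAdd.of_subsingleton (X := PUnit),
    Function.injective_id, fun _ => ⟨0, rfl⟩, by rw [range_id, ker_zero]⟩

theorem congr_left (h : HasAddCoresolution A T B) (e : T ≃ₗ[A] U) : HasAddCoresolution A U B := by
  obtain ⟨T₀, T₁, f, g, h₀, h₁, hfg⟩ := h
  have hT : InAdd A U T := InAdd.self.congr e.symm
  exact ⟨T₀, T₁, f, g, hT.trans h₀, hT.trans h₁, hfg⟩

theorem congr_right (h : HasAddCoresolution A T B) (e : B ≃ₗ[A] U) : HasAddCoresolution A T U := by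
  obtain ⟨T₀, T₁, f, g, h₀, h₁, hf, hg, hfg⟩ := h
  refine ⟨T₀, T₁, f ∘ₗ e.symm.toLinearMap, g, h₀, h₁, hf.comp e.symm.injective, hg, ?_⟩
  rw [← hfg, range_comp_of_range_eq_top _ e.symm.range]

theorem pi {α : Type} [Finite α] {B : α → Type} [∀ a, AddCommGroup (B a)] [∀ a, Module A (B a)]
    (h : ∀ a, HasAddCoresolution A T (B a)) : HasAddCoresolution A T (∀ a, B a) := by
  choose T₀ T₁ f g h₀ h₁ hf hg hfg using h
  refine ⟨ModuleCat.of A (∀ a, T₀ a), ModuleCat.of A (∀ a, T₁ a), piMap f, piMap g,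
    InAdd.pi h₀, InAdd.pi h₁, Function.Injective.piMap hf, Function.Surjective.piMap hg, ?_⟩
  refine (exact_iff.mp fun x => ?_).symm
  have hfg' (a : α) : Function.Exact (f a) (g a) := exact_iff.mpr (hfg a).symm
  simp only [coe_piMap, Set.range_piMap, Set.mem_univ_pi, funext_iff, Pi.map_apply]
  exact forall_congr' fun a => hfg' a (x a)

theorem of_pullback {π : B →ₗ[A] X} {ε : B →ₗ[A] V} {ι : X →ₗ[A] W} {ρ : V →ₗ[A] W}
    (hX : HasAddCoresolution A T X) (hV : InAdd A T V) (hW : InAdd A T W)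
    (hTW : Ext1Zero A T W) (hρ : Function.Surjective ρ)
    (hinj : Function.Injective (π.prod ε)) (hpb : Function.Exact (π.prod ε) (ι.coprod (-ρ))) :
    HasAddCoresolution A T B := by
  obtain ⟨T₀, T₁, f, g, h₀, h₁, hf, hg, hfg⟩ := hX
  replace hfg : Function.Exact f g := exact_iff.mpr hfg.symm
  obtain ⟨h, rfl⟩ := (hTW.of_inAdd_left h₁).exists_extend hf hg hfg ι
  refine ⟨ModuleCat.of A (T₀ × V), ModuleCat.of A (T₁ × W), (f ∘ₗ π).prod ε,
    (g ∘ₗ fst A T₀ V).prod (h.coprod (-ρ)), h₀.prod hV, h₁.prod hW, ?_, ?_, ?_⟩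
  · exact (hf.prodMap Function.injective_id).comp hinj
  · rintro ⟨t, w⟩
    obtain ⟨u, rfl⟩ := hg t
    obtain ⟨v, hv⟩ := hρ (h u - w)
    exact ⟨(u, v), by simp [hv]⟩
  · refine (exact_iff.mp ?_).symm
    rintro ⟨u, v⟩
    constructor
    · intro huv
      obtain ⟨hu, hv⟩ : g u = 0 ∧ h u + -ρ v = 0 := Prod.ext_iff.mp huv
      obtain ⟨x, rfl⟩ := (hfg u).mp hu
      obtain ⟨b, hb⟩ := (hpb (x, v)).mp hv
      obtain ⟨rfl, rfl⟩ : π b = x ∧ ε b = v := Prod.ext_iff.mp hb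
      exact ⟨b, rfl⟩
    · rintro ⟨b, hb⟩
      obtain ⟨rfl, rfl⟩ : f (π b) = u ∧ ε b = v := Prod.ext_iff.mp hb
      exact Prod.ext (hfg.apply_apply_eq_zero (π b)) (hpb.apply_apply_eq_zero b)

end HasAddCoresolution

/-- The evaluation map `T^(Hom(T, Y)) → Y`, whose image is the trace of `T` in `Y`. -/
noncomputable def traceMap (A T Y : Type) [Ring A] [AddCommGroup T] [Module A T] [AddCommGroup Y]
    [Module A Y] : ((T →ₗ[A] Y) →₀ T) →ₗ[A] Y :=
  Finsupp.lsum ℕ fun h => h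

@[simp]
theorem traceMap_single (h : T →ₗ[A] Y) (t : T) :
    traceMap A T Y (Finsupp.single h t) = h t := by
  simp [traceMap]

theorem InAdd.range_le_range_traceMap (hX : InAdd A T X) (f : X →ₗ[A] Y) :
    range f ≤ range (traceMap A T Y) := by
  obtain ⟨k, a, b, hba⟩ := hX
  rintro _ ⟨x, rfl⟩
  refine ⟨∑ j, Finsupp.single (f ∘ₗ b ∘ₗ LinearMap.single A (fun _ => T) j) (a x j), ?_⟩
  simp only [map_sum, traceMap_single, comp_apply]
  rw [← map_sum, ← map_sum]
  exact congrArg f ((congrArg b (sum_single_apply _ (a x))).trans (LinearMap.congr_fun hba x))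

theorem HasAddCoresolution.traceMap_surjective (hA : HasAddCoresolution A T A)
    (hY : Ext1Zero A T Y) : Function.Surjective (traceMap A T Y) := by
  obtain ⟨T₀, T₁, f, g, h₀, h₁, hf, hg, hfg⟩ := hA
  intro y
  obtain ⟨w, hw⟩ := (hY.of_inAdd_left h₁).exists_extend hf hg (exact_iff.mpr hfg.symm)
    (toSpanSingleton A Y y)
  have hy : w (f 1) = y := (LinearMap.congr_fun hw 1).trans (one_smul A y)
  exact h₀.range_le_range_traceMap w ⟨f 1, hy⟩

theorem Ext1Zero.ker_traceMap [IsNoetherianRing A] [Module.Finite A T] (h : Ext1Zero A T T) :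
    Ext1Zero A T (ker (traceMap A T Y)) := by
  have hT := Finsupp.linearCombination_id_surjective A T
  refine of_exists_extend hT (exact_subtype_ker_map _) fun f => ?_
  obtain ⟨g, hg⟩ := (h.finsupp_right (T →ₗ[A] Y)).exists_extend_ker hT
    ((ker (traceMap A T Y)).subtype ∘ₗ f)
  have hgf (x) : g (Subtype.val x) = f x := LinearMap.congr_fun hg x
  -- the composite `T → Y` is itself an index of the source of `traceMap`, so it can be subtracted
  obtain ⟨u, hu⟩ := exists_comp_eq_of_surjective hT (f := traceMap A T Y ∘ₗ g) fun x hx => by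
    rw [mem_ker, comp_apply, hgf ⟨x, hx⟩, map_coe_ker]
  let p := Finsupp.linearCombination A (_root_.id : T → T)
  refine ⟨(g - Finsupp.lsingle u ∘ₗ p).codRestrict (ker (traceMap A T Y)) fun x => ?_,
    LinearMap.ext fun x => Subtype.ext ?_⟩
  · have hux : u (p x) = traceMap A T Y (g x) := LinearMap.congr_fun hu x
    simp [hux]
  · change g x - Finsupp.single u (p x) = f x
    rw [hgf, map_coe_ker, Finsupp.single_zero, sub_zero]

theorem inAdd_of_finite_of_split [Module.Finite A X] {J : Type} {π : (J →₀ T) →ₗ[A] X}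
    {σ : X →ₗ[A] J →₀ T} (h : π ∘ₗ σ = LinearMap.id) : InAdd A T X := by
  obtain ⟨s, hs⟩ := exists_finset_support_subset σ
  refine (InAdd.fun_const s).of_split (LinearMap.pi fun j : s => Finsupp.lapply j.1 ∘ₗ σ)
    (∑ j : s, π ∘ₗ Finsupp.lsingle j.1 ∘ₗ proj j) (LinearMap.ext fun x => ?_)
  have hsum : ∑ j : s, π (Finsupp.single j.1 (σ x j.1)) = x := by
    rw [← map_sum, Finset.sum_coe_sort s fun j => Finsupp.single j (σ x j),
      sum_single_eq_of_support_subset (hs x)]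
    exact LinearMap.congr_fun h x
  simpa [LinearMap.sum_apply] using hsum

/-- A tilting module is maximal among the modules of projective dimension at most one without
self-extensions: both `X` and the kernel of its approximation are generated by `T`, so the
approximation splits. -/
theorem InAdd.of_ext1Zero [IsNoetherianRing A] [Module.Finite A T] [Module.Finite A X]
    (hT : Ext1Zero A T T) (hA : HasAddCoresolution A T A) (hX : PdLeOne A X)
    (hXT : Ext1Zero A X T) (hTX : Ext1Zero A T X) : InAdd A T X := by
  have hsurj := hA.traceMap_surjective hTX
  have hker : Ext1Zero A X (ker (traceMap A T X)) :=
    (hXT.finsupp_right _).of_surjective_right hX (hA.traceMap_surjective hT.ker_traceMap)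
  obtain ⟨σ, hσ⟩ := hker.exists_section Subtype.val_injective hsurj (exact_subtype_ker_map _)
  exact inAdd_of_finite_of_split hσ

end HomologicalAlgebra

section IndecomposableModules

open LinearMap

variable {A : Type} [Ring A] {L M N Q X : Type}
  [AddCommGroup L] [Module A L] [AddCommGroup M] [Module A M] [AddCommGroup N] [Module A N]
  [AddCommGroup Q] [Module A Q] [AddCommGroup X] [Module A X]

/-- A module is local if it has a largest proper submodule. -/
def IsLocalMod (A M : Type) [Ring A] [AddCommGroup M] [Module A M] : Prop :=
  ∃ W : Submodule A M, W ≠ ⊤ ∧ ∀ N : Submodule A M, N ≠ ⊤ → N ≤ W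

namespace IsLocalMod

theorem nontrivial (h : IsLocalMod A M) : Nontrivial M := by
  obtain ⟨W, hW, -⟩ := h
  by_contra hM
  have := not_nontrivial_iff_subsingleton.mp hM
  exact hW (Subsingleton.elim _ _)

theorem exists_eq_top_of_iSup_eq_top (h : IsLocalMod A M) {α : Type} {N : α → Submodule A M}
    (hN : ⨆ a, N a = ⊤) : ∃ a, N a = ⊤ := by
  obtain ⟨W, hW, hmax⟩ := h
  by_contra! hne
  exact hW (eq_top_iff.mpr (hN ▸ iSup_le fun a => hmax _ (hne a)))

theorem eq_top_or_eq_top (h : IsLocalMod A M) {N N' : Submodule A M} (hsup : N ⊔ N' = ⊤) :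
    N = ⊤ ∨ N' = ⊤ := by
  obtain ⟨W, hW, hmax⟩ := h
  by_contra! hN
  exact hW (eq_top_iff.mpr (hsup ▸ sup_le (hmax _ hN.1) (hmax _ hN.2)))

theorem isIndecomposableMod (h : IsLocalMod A M) : IsIndecomposableMod A M := by
  refine ⟨h.nontrivial, fun N N' hc => ?_⟩
  rcases h.eq_top_or_eq_top hc.sup_eq_top with rfl | rfl
  · exact .inr (by simpa using hc.inf_eq_bot)
  · exact .inl (by simpa using hc.inf_eq_bot)

theorem of_surjective (h : IsLocalMod A M) [Nontrivial N] {q : M →ₗ[A] N}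
    (hq : Function.Surjective q) : IsLocalMod A N := by
  obtain ⟨W, hW, hmax⟩ := h
  have hker : ker q ≤ W := hmax _ fun hker => by
    obtain ⟨y, hy⟩ := exists_ne (0 : N)
    obtain ⟨x, rfl⟩ := hq y
    exact hy (ker_eq_top.mp hker ▸ rfl)
  refine ⟨W.map q, fun hmap => hW ?_, fun P hP => ?_⟩
  · rw [← Submodule.comap_map_eq_self hker, hmap, Submodule.comap_top]
  · rw [← Submodule.map_comap_eq_of_surjective hq P]
    refine Submodule.map_mono (hmax _ fun hcomap => hP ?_)
    rw [← Submodule.map_comap_eq_of_surjective hq P, hcomap, Submodule.map_top,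
      range_eq_top.mpr hq]

theorem exists_bijective_of_sum_eq_id [IsNoetherian A M] (h : IsLocalMod A M) {α : Type}
    [Fintype α] {f : α → M →ₗ[A] M} (hf : ∑ a, f a = LinearMap.id) :
    ∃ a, Function.Bijective (f a) := by
  have hsup : ⨆ a, range (f a) = ⊤ := eq_top_iff.mpr fun x _ => by
    rw [← id_apply (R := A) x, ← hf, LinearMap.sum_apply]
    exact Submodule.sum_mem _ fun a _ => Submodule.mem_iSup_of_mem a (mem_range_self _ _)
  obtain ⟨a, ha⟩ := h.exists_eq_top_of_iSup_eq_top hsup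
  have hsurj := range_eq_top.mp ha
  exact ⟨a, IsNoetherian.injective_of_surjective_endomorphism _ hsurj, hsurj⟩

theorem exists_bijective_comp_of_pi [IsNoetherian A M] (h : IsLocalMod A M) {α : Type} [Finite α]
    {Y : α → Type} [∀ a, AddCommGroup (Y a)] [∀ a, Module A (Y a)] {f : M →ₗ[A] ∀ a, Y a}
    {g : (∀ a, Y a) →ₗ[A] M} (hgf : Function.Bijective (g ∘ₗ f)) :
    ∃ (a : α) (f' : M →ₗ[A] Y a) (g' : Y a →ₗ[A] M), Function.Bijective (g' ∘ₗ f') := by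
  classical
  have := Fintype.ofFinite α
  let e := LinearEquiv.ofBijective _ hgf
  have hsum : ∑ a, (e.symm.toLinearMap ∘ₗ g ∘ₗ single A Y a) ∘ₗ (proj a ∘ₗ f) =
      LinearMap.id := by
    refine LinearMap.ext fun x => ?_
    have hx : ∑ a, single A Y a (f x a) = f x := sum_single_apply Y (f x)
    simp only [LinearMap.sum_apply, comp_apply, proj_apply, ← map_sum, hx]
    exact e.symm_apply_apply x
  obtain ⟨a, ha⟩ := h.exists_bijective_of_sum_eq_id hsum
  exact ⟨a, _, _, ha⟩

/-- `v` induces a surjection onto the simple module `Q ⧸ C`, along which the projective module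
`Q` lifts. -/
theorem exists_bijective_comp [IsNoetherian A L] (h : IsLocalMod A L) [Module.Projective A Q]
    {C : Submodule A Q} (hC : IsCoatom C) {v : L →ₗ[A] Q} (hv : ¬ range v ≤ C) :
    ∃ w : Q →ₗ[A] L, Function.Bijective (w ∘ₗ v) := by
  have hsup : range v ⊔ C = ⊤ := hC.2 _ (right_lt_sup.mpr hv)
  have hsurj : Function.Surjective (C.mkQ ∘ₗ v) := by
    rw [← range_eq_top, range_comp, ← Submodule.range_mkQ C, ← Submodule.map_top C.mkQ, ← hsup,
      Submodule.map_sup, Submodule.mkQ_map_self, sup_bot_eq]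
  obtain ⟨w, hw⟩ := Module.projective_lifting_property (C.mkQ ∘ₗ v) C.mkQ hsurj
  have hwv (x : L) : x - w (v x) ∈ ker (C.mkQ ∘ₗ v) := by
    rw [LinearMap.mem_ker, map_sub, sub_eq_zero]
    exact (LinearMap.congr_fun hw (v x)).symm
  have hcover : range (w ∘ₗ v) ⊔ ker (C.mkQ ∘ₗ v) = ⊤ := eq_top_iff.mpr fun x _ =>
    Submodule.mem_sup.mpr ⟨_, mem_range_self (w ∘ₗ v) x, _, hwv x, by simp⟩
  have hker : ker (C.mkQ ∘ₗ v) ≠ ⊤ := fun hker => hv <| by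
    rwa [ker_comp, Submodule.ker_mkQ, eq_top_iff, ← Submodule.map_le_iff_le_comap,
      Submodule.map_top] at hker
  have hwv_surj := range_eq_top.mp ((h.eq_top_or_eq_top hcover).resolve_right hker)
  exact ⟨w, IsNoetherian.injective_of_surjective_endomorphism _ hwv_surj, hwv_surj⟩

end IsLocalMod

namespace IsIndecomposableMod

theorem congr (h : IsIndecomposableMod A M) (e : M ≃ₗ[A] N) : IsIndecomposableMod A N := by
  have := h.1
  refine ⟨e.symm.toEquiv.nontrivial, fun P Q hPQ => ?_⟩
  simpa [Submodule.map_eq_bot_iff] using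
    h.2 _ _ ((Submodule.orderIsoMapComap e.symm).isCompl hPQ)

theorem nonempty_equiv_of_bijective_comp (h : IsIndecomposableMod A M) [Nontrivial X]
    {a : X →ₗ[A] M} {b : M →ₗ[A] X} (hba : Function.Bijective (b ∘ₗ a)) :
    Nonempty (X ≃ₗ[A] M) := by
  have ha : Function.Injective a := Function.Injective.of_comp (f := b) hba.injective
  have hc : IsCompl (range a) (ker b) := by
    refine ⟨Submodule.disjoint_def.mpr ?_, codisjoint_iff.mpr (eq_top_iff.mpr fun m _ => ?_)⟩
    · rintro _ ⟨x, rfl⟩ hx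
      rw [hba.injective (a₁ := x) (a₂ := 0) (by simpa using hx), map_zero]
    · obtain ⟨x, hx⟩ := hba.surjective (b m)
      exact Submodule.mem_sup.mpr ⟨a x, mem_range_self a x, m - a x, by simpa [sub_eq_zero] using
        hx.symm, by abel⟩
  have hrange : range a ≠ ⊥ := fun hbot => by
    obtain ⟨x, hx⟩ := exists_ne (0 : X)
    exact hx (ha (by simp [range_eq_bot.mp hbot]))
  have hker := (h.2 _ _ hc).resolve_left hrange
  exact ⟨LinearEquiv.ofBijective a
    ⟨ha, range_eq_top.mp (by simpa [hker] using hc.sup_eq_top)⟩⟩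

/-- The projection onto `N` provided by projectivity is, by Fitting's lemma, bijective or
nilpotent. -/
theorem eq_top_or_eq_top [IsArtinianRing A] [Module.Finite A M] [Module.Projective A M]
    (h : IsIndecomposableMod A M) {N N' : Submodule A M} (hsup : N ⊔ N' = ⊤) :
    N = ⊤ ∨ N' = ⊤ := by
  have hsurj : Function.Surjective (N.subtype.coprod N'.subtype) := by
    rwa [← range_eq_top, range_coprod, Submodule.range_subtype, Submodule.range_subtype]
  obtain ⟨u, hu⟩ := Module.projective_lifting_property _ (LinearMap.id : M →ₗ[A] M) hsurj
  let f : Module.End A M := N.subtype ∘ₗ fst A N N' ∘ₗ u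
  have hf : range f ≤ N := (range_comp_le_range _ _).trans N.range_subtype.le
  have hg : range (1 - f) ≤ N' := by
    rintro _ ⟨x, rfl⟩
    have hx : ((u x).1 : M) + (u x).2 = x := LinearMap.congr_fun hu x
    convert (u x).2.2 using 1
    exact sub_eq_of_eq_add' hx.symm
  obtain ⟨n, hn⟩ := (eventually_isCompl_ker_pow_range_pow f).exists_forall_of_atTop
  have hc := hn (n + 1) n.le_succ
  rcases h.2 _ _ hc with hker | hrange
  · refine .inl (eq_top_iff.mpr (le_trans ?_ hf))
    rw [← hc.sup_eq_top, hker, bot_sup_eq, pow_succ']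
    exact range_comp_le_range (f ^ n) f
  · refine .inr (eq_top_iff.mpr (le_trans ?_ hg))
    have hnil : IsNilpotent f := ⟨n + 1, range_eq_bot.mp hrange⟩
    exact (range_eq_top.mpr ((Module.End.isUnit_iff _).mp hnil.isUnit_one_sub).surjective).ge

theorem le_jacobson [IsArtinianRing A] [Module.Finite A M] [Module.Projective A M]
    (h : IsIndecomposableMod A M) {N : Submodule A M} (hN : N ≠ ⊤) : N ≤ Module.jacobson A M :=
  le_sInf fun C hC => by
    by_contra hNC
    exact (h.eq_top_or_eq_top (hC.2 _ (right_lt_sup.mpr hNC))).elim hN hC.1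

end IsIndecomposableMod

theorem IsBasicMod.of_pi {k : ℕ} {M : Fin k → Type} [∀ a, AddCommGroup (M a)]
    [∀ a, Module A (M a)] (hM : ∀ a, IsIndecomposableMod A (M a))
    (hne : ∀ a b, a ≠ b → IsEmpty (M a ≃ₗ[A] M b)) (e : (∀ a, M a) ≃ₗ[A] X) :
    IsBasicMod A X := by
  let j (a : Fin k) : M a →ₗ[A] X := e.toLinearMap ∘ₗ LinearMap.single A M a
  have hj (a) : Function.Injective (j a) := e.injective.comp (Pi.single_injective a)
  have hdisj (a : Fin k) : Disjoint (range (j a)) (⨆ (b) (_ : b ≠ a), range (j b)) := by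
    have hle : ⨆ (b) (_ : b ≠ a), range (j b) ≤ ker (proj a ∘ₗ e.symm.toLinearMap) := by
      refine iSup₂_le fun b hb => ?_
      rintro _ ⟨y, rfl⟩
      simp [j, Pi.single_eq_of_ne hb.symm]
    refine Submodule.disjoint_def.mpr ?_
    rintro _ ⟨y, rfl⟩ hy
    have : y = 0 := by simpa [j] using hle hy
    rw [this, map_zero]
  have hsup : ⨆ a, range (j a) = ⊤ := by
    simp only [j, range_comp, ← Submodule.map_iSup, iSup_range_single, Submodule.map_top,
      LinearEquiv.range]
  exact ⟨k, fun a => range (j a),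
    DirectSum.isInternal_submodule_of_iSupIndep_of_iSup_eq_top hdisj hsup,
    fun a => (hM a).congr (LinearEquiv.ofInjective _ (hj a)),
    fun a b hab => ⟨fun u => (hne a b hab).false ((LinearEquiv.ofInjective _ (hj a)).trans
      (u.trans (LinearEquiv.ofInjective _ (hj b)).symm))⟩⟩

theorem IsBasicMod.exists_equiv_pi (h : IsBasicMod A M) :
    ∃ (k : ℕ) (N : Fin k → Submodule A M), Nonempty ((∀ a, N a) ≃ₗ[A] M) ∧
      (∀ a, IsIndecomposableMod A (N a)) ∧ ∀ a b, a ≠ b → IsEmpty (N a ≃ₗ[A] N b) := by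
  obtain ⟨k, N, hN, hind, hne⟩ := h
  exact ⟨k, N, ⟨(DirectSum.linearEquivFunOnFintype A (Fin k) fun a => N a).symm.trans
    (LinearEquiv.ofBijective (DirectSum.coeLinearMap N) hN)⟩, hind, hne⟩

theorem range_le_iSup_range_of_sum_eq_zero {α : Type} [Fintype α] {X : α → Type}
    [∀ s, AddCommGroup (X s)] [∀ s, Module A (X s)] {t : α} (f : ∀ s, X s →ₗ[A] M)
    {β : X t →ₗ[A] ∀ s, X s} (hβ : ∀ x, β x t = x) (hfβ : ∀ x, ∑ s, f s (β x s) = 0) :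
    range (f t) ≤ ⨆ s, ⨆ (_ : s ≠ t), range (f s) := by
  classical
  rintro _ ⟨x, rfl⟩
  have hsum : f t x = -∑ s ∈ Finset.univ.erase t, f s (β x s) := by
    rw [eq_neg_iff_add_eq_zero, ← hfβ x, ← Finset.add_sum_erase _ _ (Finset.mem_univ t), hβ]
  rw [hsum]
  refine Submodule.neg_mem _ (Submodule.sum_mem _ fun s hs => ?_)
  exact Submodule.mem_iSup_of_mem s
    (Submodule.mem_iSup_of_mem (Finset.ne_of_mem_erase hs) ⟨_, rfl⟩)

theorem exists_finset_irredundant [Module.Finite A M] {Γ : Type} {N : Γ → Submodule A M}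
    (hN : ⨆ x, N x = ⊤) : ∃ s : Finset Γ,
      ⨆ x : s, N x = ⊤ ∧ ∀ x : s, ⨆ y : s, ⨆ (_ : y ≠ x), N y ≠ ⊤ := by
  classical
  have hex : ∃ s : Finset Γ, ⨆ x ∈ s, N x = ⊤ := by
    obtain ⟨s, hs⟩ := CompleteLattice.IsCompactElement.exists_finset_of_le_iSup _
      ((Submodule.fg_iff_compact ⊤).mp Module.Finite.fg_top) _ hN.ge
    exact ⟨s, top_le_iff.mp hs⟩
  obtain ⟨s, hs⟩ := exists_minimal_of_wellFoundedLT _ hex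
  have hsup : ⨆ x : s, N x = ⊤ := iSup_subtype.trans hs.prop
  refine ⟨s, hsup, fun x hx => ?_⟩
  refine (Finset.erase_ssubset x.2).not_ge
    (hs.le_of_le (top_le_iff.mp ?_) (Finset.erase_subset x.1 s))
  rw [← hx]
  exact iSup₂_le fun y hy => le_iSup₂_of_le y.1
    (Finset.mem_erase.mpr ⟨fun h => hy (Subtype.ext h), y.2⟩) le_rfl

end IndecomposableModules

section NoncrossingIntervals

open BinaryTree

/-- The interval `p` crosses `q` if `p.1 < q.1 ≤ p.2 < q.2`. The weak inequality in the middle is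
intended: adjacent intervals cross. -/
def Crosses (p q : ℕ × ℕ) : Prop := p.1 < q.1 ∧ q.1 ≤ p.2 ∧ p.2 < q.2

/-- The intervals attached to the nodes of a binary tree: number the nodes in order, starting with
`a`; the subtree at a node consisting of the nodes `k, …, l - 1` contributes `(k, l)`. -/
def treeIntervals : BinaryTree Unit → ℕ → Finset (ℕ × ℕ)
  | .nil, _ => ∅
  | .node _ l r, a => insert (a, a + (l.numNodes + r.numNodes + 1))
      (treeIntervals l a ∪ treeIntervals r (a + l.numNodes + 1))

variable {t t' l l' r r' : BinaryTree Unit} {u u' : Unit} {a : ℕ} {p q : ℕ × ℕ}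

theorem mem_treeIntervals_node :
    p ∈ treeIntervals (.node u l r) a ↔ p = (a, a + (l.numNodes + r.numNodes + 1)) ∨
      p ∈ treeIntervals l a ∨ p ∈ treeIntervals r (a + l.numNodes + 1) := by
  rw [treeIntervals, Finset.mem_insert, Finset.mem_union]

theorem bounds_of_mem_treeIntervals (h : p ∈ treeIntervals t a) :
    a ≤ p.1 ∧ p.1 < p.2 ∧ p.2 ≤ a + t.numNodes := by
  induction t generalizing a with
  | nil => exact absurd h (Finset.notMem_empty p)
  | node u l r ihl ihr =>
    rw [numNodes]
    rcases mem_treeIntervals_node.mp h with rfl | h | h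
    · dsimp only
      lia
    · have := ihl h
      lia
    · have := ihr h
      lia

theorem not_crosses_of_mem_treeIntervals (hp : p ∈ treeIntervals t a)
    (hq : q ∈ treeIntervals t a) : ¬ Crosses p q := by
  induction t generalizing a with
  | nil => exact absurd hp (Finset.notMem_empty p)
  | node u l r ihl ihr =>
    have hpb := bounds_of_mem_treeIntervals hp
    have hqb := bounds_of_mem_treeIntervals hq
    rw [numNodes] at hpb hqb
    rintro ⟨h₁, h₂, h₃⟩
    rcases mem_treeIntervals_node.mp hp with rfl | hp | hp
    · exact (hqb.2.2.trans_lt (h₃.trans_le' (by dsimp only; lia))).false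
    · rcases mem_treeIntervals_node.mp hq with rfl | hq | hq
      · exact (h₁.trans_le hpb.1).false
      · exact ihl hp hq ⟨h₁, h₂, h₃⟩
      · have := bounds_of_mem_treeIntervals hp
        have := bounds_of_mem_treeIntervals hq
        lia
    · rcases mem_treeIntervals_node.mp hq with rfl | hq | hq
      · exact (h₁.trans_le hpb.1).false
      · have := bounds_of_mem_treeIntervals hp
        have := bounds_of_mem_treeIntervals hq
        lia
      · exact ihr hp hq ⟨h₁, h₂, h₃⟩

theorem root_mem_treeIntervals (h : 0 < t.numNodes) : (a, a + t.numNodes) ∈ treeIntervals t a := by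
  cases t with
  | nil => exact absurd h (lt_irrefl 0)
  | node u l r => exact mem_treeIntervals_node.mpr (Or.inl rfl)

theorem treeIntervals_left :
    treeIntervals l a = {p ∈ treeIntervals (.node u l r) a | p.2 ≤ a + l.numNodes} := by
  ext p
  rw [Finset.mem_filter, mem_treeIntervals_node]
  refine ⟨fun h => ⟨Or.inr (Or.inl h), (bounds_of_mem_treeIntervals h).2.2⟩, ?_⟩
  rintro ⟨rfl | h | h, hp⟩
  · dsimp only at hp
    lia
  · exact h
  · have := bounds_of_mem_treeIntervals h
    lia

theorem treeIntervals_right :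
    treeIntervals r (a + l.numNodes + 1) =
      {p ∈ treeIntervals (.node u l r) a | a + l.numNodes + 1 ≤ p.1} := by
  ext p
  rw [Finset.mem_filter, mem_treeIntervals_node]
  refine ⟨fun h => ⟨Or.inr (Or.inr h), (bounds_of_mem_treeIntervals h).1⟩, ?_⟩
  rintro ⟨rfl | h | h, hp⟩
  · dsimp only at hp
    lia
  · have := bounds_of_mem_treeIntervals h
    lia
  · exact h

theorem numNodes_left_le_of_treeIntervals_eq
    (hn : (node u l r).numNodes = (node u' l' r').numNodes)
    (h : treeIntervals (.node u l r) a = treeIntervals (.node u' l' r') a) :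
    l'.numNodes ≤ l.numNodes := by
  by_contra! hlt
  simp only [numNodes] at hn
  have hmem : (a, a + l'.numNodes) ∈ treeIntervals (.node u' l' r') a :=
    mem_treeIntervals_node.mpr (Or.inr (Or.inl (root_mem_treeIntervals hlt.pos)))
  rw [← h, mem_treeIntervals_node, Prod.mk.injEq] at hmem
  rcases hmem with heq | hmem | hmem
  · lia
  · have := bounds_of_mem_treeIntervals hmem
    dsimp only at this
    lia
  · have := bounds_of_mem_treeIntervals hmem
    dsimp only at this
    lia

theorem eq_of_treeIntervals_eq (hn : t.numNodes = t'.numNodes)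
    (h : treeIntervals t a = treeIntervals t' a) : t = t' := by
  induction t generalizing t' a with
  | nil =>
    cases t' with
    | nil => rfl
    | node => exact absurd hn.symm (Nat.succ_ne_zero _)
  | node u l r ihl ihr =>
    cases t' with
    | nil => exact absurd hn (Nat.succ_ne_zero _)
    | node u' l' r' =>
      have hl : l.numNodes = l'.numNodes := le_antisymm
        (numNodes_left_le_of_treeIntervals_eq hn.symm h.symm)
        (numNodes_left_le_of_treeIntervals_eq hn h)
      have hr : r.numNodes = r'.numNodes := by
        simp only [numNodes] at hn
        lia
      have hl' : treeIntervals l a = treeIntervals l' a := by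
        rw [treeIntervals_left (u := u) (r := r), h, hl, ← treeIntervals_left]
      have hr' : treeIntervals r (a + l.numNodes + 1) = treeIntervals r' (a + l.numNodes + 1) := by
        rw [treeIntervals_right (u := u), h, hl, ← treeIntervals_right]
      rw [ihl hl hl', ihr hr hr']

/-- The left subtree is given by the longest of the intervals `(a, a + x)` with `x < n`. -/
theorem exists_treeIntervals_superset {n : ℕ} {I : Set (ℕ × ℕ)}
    (hI : ∀ p ∈ I, a ≤ p.1 ∧ p.1 < p.2 ∧ p.2 ≤ a + n) (hc : ∀ p ∈ I, ∀ q ∈ I, ¬ Crosses p q) :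
    ∃ t : BinaryTree Unit, t.numNodes = n ∧ ∀ p ∈ I, p ∈ treeIntervals t a := by
  classical
  induction n using Nat.strong_induction_on generalizing a I with
  | _ n ih =>
  rcases n with _ | m
  · refine ⟨.nil, rfl, fun p hp => ?_⟩
    have := hI p hp
    lia
  obtain ⟨x, hxm, hx, hmax⟩ : ∃ x ≤ m, (x = 0 ∨ (a, a + x) ∈ I) ∧
      ∀ y ≤ m, (a, a + y) ∈ I → y ≤ x :=
    ⟨Nat.findGreatest (fun x => x = 0 ∨ (a, a + x) ∈ I) m, Nat.findGreatest_le m,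
      Nat.findGreatest_spec (P := fun x => x = 0 ∨ (a, a + x) ∈ I) (Nat.zero_le m) (Or.inl rfl),
      fun y hy hyI => Nat.le_findGreatest hy (Or.inr hyI)⟩
  obtain ⟨l, hl, hlI⟩ := ih x (Nat.lt_succ_of_le hxm) (a := a) (I := {p ∈ I | p.2 ≤ a + x})
    (fun p hp => ⟨(hI p hp.1).1, (hI p hp.1).2.1, hp.2⟩) fun p hp q hq => hc p hp.1 q hq.1
  obtain ⟨r, hr, hrI⟩ := ih (m - x) (by lia) (a := a + x + 1) (I := {p ∈ I | a + x + 1 ≤ p.1})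
    (fun p hp => ⟨hp.2, (hI p hp.1).2.1, by have := hI p hp.1; lia⟩)
    fun p hp q hq => hc p hp.1 q hq.1
  refine ⟨.node () l r, by rw [numNodes]; lia, fun ⟨k, k'⟩ hp => ?_⟩
  obtain ⟨hk, -, hk'⟩ := hI _ hp
  dsimp only at hk hk'
  rw [mem_treeIntervals_node, hl, hr]
  by_cases hleft : k' ≤ a + x
  · exact Or.inr (Or.inl (hlI _ ⟨hp, hleft⟩))
  by_cases hright : a + x + 1 ≤ k
  · exact Or.inr (Or.inr (hrI _ ⟨hp, hright⟩))
  have hka : k = a := by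
    by_contra hne
    rcases hx with rfl | hx
    · lia
    · exact hc _ hx _ hp ⟨by dsimp only; lia, by dsimp only; lia, by dsimp only; lia⟩
  subst hka
  obtain ⟨y, rfl⟩ := Nat.exists_eq_add_of_le (show k ≤ k' by lia)
  have hym : ¬ y ≤ m := fun hym => by
    have := hmax y hym hp
    lia
  exact Or.inl (by congr 2; lia)

end NoncrossingIntervals

/-- A family of injective modules `E i`, each with a chain `G i 0 > G i 1 > ⋯ > G i (n i)` of
submodules in which `G i (j + 1)` is the largest proper submodule of `G i j`. The `G i j` with
`j < n i` are projective and together generate all modules, and a homomorphism `E i → E k` either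
has its image in the last term `G k (n k)` or is an isomorphism respecting the chains. For a left
Harada algebra, `E i = e_{i1}R` and `G i j = rad^j (e_{i1}R)`. -/
structure ProjectiveChains (A : Type) [Ring A] {ι : Type} (E : ι → Type)
    [∀ i, AddCommGroup (E i)] [∀ i, Module A (E i)] where
  n : ι → ℕ
  n_pos (i : ι) : 0 < n i
  G (i : ι) : ℕ → Submodule A (E i)
  succ_lt (i : ι) (j : ℕ) : j < n i → G i (j + 1) < G i j
  le_succ_of_lt (i : ι) (j : ℕ) : j < n i → ∀ N < G i j, N ≤ G i (j + 1)
  projective (i : ι) (j : ℕ) : j < n i → Module.Projective A (G i j)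
  finite (i : ι) : Module.Finite A (E i)
  injective (i : ι) : Module.Injective A (E i)
  range_le_or_bijective (i k : ι) (f : E i →ₗ[A] E k) : LinearMap.range f ≤ G k (n k) ∨
    i = k ∧ Function.Bijective f ∧ ∀ j, (G i j).map f = G k j
  eq_top_of_range_le (M : Type) [AddCommGroup M] [Module A M] (N : Submodule A M) :
    (∀ i j, j < n i → ∀ f : G i j →ₗ[A] M, LinearMap.range f ≤ N) → N = ⊤

namespace ProjectiveChains

open LinearMap

variable {A : Type} [Ring A] {ι : Type} {E : ι → Type} [∀ i, AddCommGroup (E i)]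
  [∀ i, Module A (E i)] (S : ProjectiveChains A E)

/-- The chain `G i 0 > G i 1 > ⋯ > G i (n i - 1)` of projective modules, continued by zero. -/
def P (i : ι) (j : ℕ) : Submodule A (E i) := if j < S.n i then S.G i j else ⊥

/-- The subquotient `P i k / P i l` of the `i`-th chain, for `k ≤ l`. -/
abbrev Quot (i : ι) (k l : ℕ) : Type := ↥(S.P i k) ⧸ (S.P i l).submoduleOf (S.P i k)

/-- The quotient map `P i k → P i k / P i l`. -/
abbrev mkQuot (i : ι) (k l : ℕ) : S.P i k →ₗ[A] S.Quot i k l := Submodule.mkQ _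

variable {S} {i i' i'' : ι} {j k l k' l' : ℕ}

theorem P_of_lt (h : j < S.n i) : S.P i j = S.G i j := if_pos h

theorem P_of_le (h : S.n i ≤ j) : S.P i j = ⊥ := if_neg h.not_gt

theorem G_le_G (hkl : k ≤ l) (hl : l ≤ S.n i) : S.G i l ≤ S.G i k := by
  induction l, hkl using Nat.le_induction with
  | base => exact le_rfl
  | succ l _ ih => exact (S.succ_lt i l hl).le.trans (ih (Nat.le_of_succ_le hl))

theorem G_n_le_P (hj : j < S.n i) : S.G i (S.n i) ≤ S.P i j :=
  P_of_lt hj ▸ G_le_G hj.le le_rfl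

theorem P_antitone (i : ι) : Antitone (S.P i) := fun k l hkl => by
  by_cases hl : l < S.n i
  · rw [P_of_lt hl, P_of_lt (hkl.trans_lt hl)]
    exact G_le_G hkl hl.le
  · rw [P_of_le (not_lt.mp hl)]
    exact bot_le

theorem P_le_G_succ (hkl : k < l) : S.P i l ≤ S.G i (k + 1) := by
  by_cases hl : l < S.n i
  · exact P_of_lt hl ▸ G_le_G hkl hl.le
  · exact P_of_le (not_lt.mp hl) ▸ bot_le

theorem G_succ_lt_P (hk : k < S.n i) : S.G i (k + 1) < S.P i k :=
  P_of_lt hk ▸ S.succ_lt i k hk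

theorem P_lt_P (hkl : k < l) (hk : k < S.n i) : S.P i l < S.P i k :=
  (P_le_G_succ hkl).trans_lt (G_succ_lt_P hk)

instance projective_P (i : ι) (j : ℕ) : Module.Projective A (S.P i j) := by
  by_cases h : j < S.n i
  · rw [P_of_lt h]
    exact S.projective i j h
  · rw [P_of_le (not_lt.mp h)]
    infer_instance

theorem isLocalMod_P (hj : j < S.n i) : IsLocalMod A (S.P i j) := by
  have hmem (N : Submodule A (S.P i j)) : N.map (S.P i j).subtype ≤ S.P i j :=
    Submodule.map_subtype_le _ _
  refine ⟨(S.G i (j + 1)).submoduleOf (S.P i j), fun htop => ?_, fun N hN => ?_⟩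
  · exact (G_succ_lt_P hj).not_ge (Submodule.submoduleOf_eq_top.mp htop)
  · refine Submodule.map_le_iff_le_comap.mp (S.le_succ_of_lt i j hj _ ?_)
    rw [← P_of_lt hj]
    refine (hmem N).lt_of_ne fun heq => hN ?_
    exact Submodule.map_injective_of_injective (S.P i j).injective_subtype
      (by rw [heq, Submodule.map_top, Submodule.range_subtype])

theorem eq_top_of_range_P_le {M : Type} [AddCommGroup M] [Module A M] {N : Submodule A M}
    (h : ∀ i j, j < S.n i → ∀ f : S.P i j →ₗ[A] M, range f ≤ N) : N = ⊤ :=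
  S.eq_top_of_range_le M N fun i j hj => P_of_lt hj ▸ h i j hj

theorem mkQuot_surjective (i : ι) (k l : ℕ) : Function.Surjective (S.mkQuot i k l) :=
  Submodule.mkQ_surjective _

theorem mkQuot_eq_zero {x : S.P i k} : S.mkQuot i k l x = 0 ↔ (x : E i) ∈ S.P i l :=
  Submodule.Quotient.mk_eq_zero _

theorem mkQuot_eq_mkQuot {x y : S.P i k} :
    S.mkQuot i k l x = S.mkQuot i k l y ↔ (x : E i) - y ∈ S.P i l := by
  rw [← sub_eq_zero, ← map_sub, mkQuot_eq_zero, Submodule.coe_sub]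

theorem exact_inclusion_mkQuot (hkl : k ≤ l) :
    Function.Exact (Submodule.inclusion (S.P_antitone i hkl)) (S.mkQuot i k l) := by
  refine exact_iff.mpr ?_
  rw [Submodule.ker_mkQ, Submodule.range_inclusion, Submodule.submoduleOf]

theorem nontrivial_quot (hkl : k < l) (hk : k < S.n i) : Nontrivial (S.Quot i k l) :=
  Submodule.Quotient.nontrivial_iff.mpr fun htop =>
    (P_lt_P hkl hk).not_ge (Submodule.submoduleOf_eq_top.mp htop)

theorem isLocalMod_quot (hkl : k < l) (hk : k < S.n i) : IsLocalMod A (S.Quot i k l) :=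
  have := nontrivial_quot hkl hk
  (isLocalMod_P hk).of_surjective (mkQuot_surjective i k l)

theorem pdLeOne_quot (hkl : k ≤ l) : PdLeOne A (S.Quot i k l) := by
  refine ⟨ModuleCat.of A (S.P i k), S.mkQuot i k l, projective_P i k, mkQuot_surjective i k l, ?_⟩
  rw [(exact_inclusion_mkQuot hkl).linearMap_ker_eq]
  exact Module.Projective.of_equiv
    (LinearEquiv.ofInjective _ (Submodule.inclusion_injective (S.P_antitone i hkl)))

variable (S) in
theorem nonempty_P_equiv_quot (i : ι) (j : ℕ) :
    Nonempty (S.P i j ≃ₗ[A] S.Quot i j (S.n i)) := by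
  refine ⟨(Submodule.quotEquivOfEqBot _ ?_).symm⟩
  rw [P_of_le le_rfl]
  exact Submodule.ker_subtype _

variable (S) in
/-- `f : E i → E k` is small if its image lies in `G k (n k)`, the part of `E k` below all the
projectives `P k j`. By assumption this means that `f` is not an isomorphism respecting the
chains. -/
def IsSmall (f : E i →ₗ[A] E i') : Prop := range f ≤ S.G i' (S.n i')

theorem IsSmall.mem {f : E i →ₗ[A] E i'} (h : S.IsSmall f) (x : E i) :
    f x ∈ S.G i' (S.n i') := h (mem_range_self f x)

theorem IsSmall.mem_P {f : E i →ₗ[A] E i'} (h : S.IsSmall f) (x : E i) (hj : j < S.n i') :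
    f x ∈ S.P i' j := G_n_le_P hj (h.mem x)

theorem eq_of_not_isSmall {f : E i →ₗ[A] E i'} (hf : ¬ S.IsSmall f) : i = i' :=
  ((S.range_le_or_bijective i i' f).resolve_left hf).1

theorem bijective_of_not_isSmall {f : E i →ₗ[A] E i'} (hf : ¬ S.IsSmall f) :
    Function.Bijective f :=
  ((S.range_le_or_bijective i i' f).resolve_left hf).2.1

theorem map_G_of_not_isSmall {f : E i →ₗ[A] E i'} (hf : ¬ S.IsSmall f) (j : ℕ) :
    (S.G i j).map f = S.G i' j :=
  ((S.range_le_or_bijective i i' f).resolve_left hf).2.2 j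

theorem map_P_of_not_isSmall {f : E i →ₗ[A] E i'} (hf : ¬ S.IsSmall f) (j : ℕ) :
    (S.P i j).map f = S.P i' j := by
  obtain rfl := eq_of_not_isSmall hf
  by_cases hj : j < S.n i
  · rw [P_of_lt hj, map_G_of_not_isSmall hf]
  · rw [P_of_le (not_lt.mp hj), Submodule.map_bot]

theorem apply_mem_P_iff {f : E i →ₗ[A] E i'} (hf : ¬ S.IsSmall f) {x : E i} :
    f x ∈ S.P i' j ↔ x ∈ S.P i j := by
  rw [← map_P_of_not_isSmall hf, ← SetLike.mem_coe, Submodule.map_coe]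
  exact (bijective_of_not_isSmall hf).injective.mem_set_image

theorem le_of_map_P_le {f : E i →ₗ[A] E i'} (hf : ¬ S.IsSmall f) (hk : k < S.n i)
    (h : (S.P i k).map f ≤ S.P i' k') : k' ≤ k := by
  rw [map_P_of_not_isSmall hf] at h
  by_contra! hlt
  exact (P_lt_P hlt (eq_of_not_isSmall hf ▸ hk)).not_ge h

theorem not_isSmall_of_bijective {f : E i →ₗ[A] E i'} (hf : Function.Bijective f) :
    ¬ S.IsSmall f := fun h => by
  have htop : S.G i' (S.n i') = ⊤ := top_unique (range_eq_top.mpr hf.surjective ▸ h)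
  exact ((G_succ_lt_P (S.n_pos i')).trans_le (htop ▸ le_top)).not_ge (G_le_G (S.n_pos i') le_rfl)

theorem IsSmall.comp_left {f : E i →ₗ[A] E i'} (hf : S.IsSmall f) (g : E i' →ₗ[A] E i'') :
    S.IsSmall (g ∘ₗ f) := by
  rw [IsSmall, range_comp]
  by_cases hg : S.IsSmall g
  · exact map_le_range.trans hg
  · obtain rfl := eq_of_not_isSmall hg
    exact (Submodule.map_mono hf).trans (map_G_of_not_isSmall hg _).le

theorem IsSmall.sum {α : Type} {s : Finset α} {f : α → E i →ₗ[A] E i'}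
    (hf : ∀ a ∈ s, S.IsSmall (f a)) : S.IsSmall (∑ a ∈ s, f a) := by
  rintro _ ⟨x, rfl⟩
  rw [LinearMap.sum_apply]
  exact Submodule.sum_mem _ fun a ha => (hf a ha).mem x

theorem IsSmall.not_isSmall_id_sub {f : E i →ₗ[A] E i} (hf : S.IsSmall f) :
    ¬ S.IsSmall (LinearMap.id - f) := fun h => by
  refine not_isSmall_of_bijective (S := S) (f := LinearMap.id (M := E i)) Function.bijective_id ?_
  rintro _ ⟨x, rfl⟩
  simpa using Submodule.add_mem _ (h.mem x) (hf.mem x)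

theorem exists_extension (S : ProjectiveChains A E) {M : Type} [AddCommGroup M] [Module A M]
    {N : Submodule A M} (f : N →ₗ[A] E i) : ∃ g : M →ₗ[A] E i, g ∘ₗ N.subtype = f :=
  have := S.injective i
  Module.Injective.extension_property A _ _ _ N.subtype N.injective_subtype f

theorem exists_lift (f : S.P i k →ₗ[A] S.Quot i' k' l') :
    ∃ (g : E i →ₗ[A] E i') (h : ∀ x ∈ S.P i k, g x ∈ S.P i' k'),
      ∀ x : S.P i k, S.mkQuot i' k' l' ⟨g x, h x x.2⟩ = f x := by
  obtain ⟨φ, hφ⟩ := Module.projective_lifting_property _ f (mkQuot_surjective i' k' l')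
  obtain ⟨g, hg⟩ := S.exists_extension ((S.P i' k').subtype ∘ₗ φ)
  have hgφ (x : S.P i k) : g x = φ x := congr($hg x)
  refine ⟨g, fun x hx => hgφ ⟨x, hx⟩ ▸ (φ ⟨x, hx⟩).2, fun x => ?_⟩
  rw [← hφ, comp_apply]
  exact congrArg _ (Subtype.ext (hgφ x))

theorem index_le_of_surjective (hkl : k < l) (hk : k < S.n i) (hkl' : k' < l')
    (hl' : l' ≤ S.n i') {f : S.Quot i k l →ₗ[A] S.Quot i' k' l'} (hf : Function.Surjective f) :
    i = i' ∧ k' ≤ k ∧ l' ≤ l := by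
  obtain ⟨g, hgP, hg⟩ := exists_lift (f ∘ₗ S.mkQuot i k l)
  have hP : S.P i' k' ≤ (S.P i k).map g ⊔ S.P i' l' := by
    intro y hy
    obtain ⟨x, hx⟩ := (hf.comp (mkQuot_surjective i k l)) (S.mkQuot i' k' l' ⟨y, hy⟩)
    have hyx : y - g x ∈ S.P i' l' := mkQuot_eq_mkQuot.mp (hx.symm.trans (hg x).symm)
    exact Submodule.mem_sup.mpr ⟨g x, ⟨x, x.2, rfl⟩, y - g x, hyx, add_sub_cancel _ _⟩
  have hsmall : ¬ S.IsSmall g := fun h =>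
    (G_succ_lt_P (hkl'.trans_le hl')).not_ge <| hP.trans <| sup_le
      ((map_le_range.trans h).trans (G_le_G (hkl'.trans_le hl') le_rfl)) (P_le_G_succ hkl')
  obtain rfl := eq_of_not_isSmall hsmall
  refine ⟨rfl, le_of_map_P_le hsmall hk (Submodule.map_le_iff_le_comap.mpr hgP), ?_⟩
  obtain hl | hl := lt_or_ge l (S.n i)
  · refine le_of_map_P_le hsmall hl (Submodule.map_le_iff_le_comap.mpr fun x hx => ?_)
    have hx' := S.P_antitone i hkl.le hx
    have hzero : S.mkQuot i k' l' ⟨g x, hgP x hx'⟩ = 0 := by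
      rw [hg ⟨x, hx'⟩, comp_apply, mkQuot_eq_zero.mpr hx, map_zero]
    exact mkQuot_eq_zero.mp hzero
  · exact hl'.trans hl

theorem ext1Zero_quot_iff (hkl : k ≤ l) {N : Type} [AddCommGroup N] [Module A N] :
    Ext1Zero A (S.Quot i k l) N ↔ ∀ f : S.P i l →ₗ[A] N,
      ∃ g : S.P i k →ₗ[A] N, g ∘ₗ Submodule.inclusion (S.P_antitone i hkl) = f :=
  ⟨fun h => h.exists_extend (Submodule.inclusion_injective _) (mkQuot_surjective i k l)
    (exact_inclusion_mkQuot hkl),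
  .of_exists_extend (mkQuot_surjective i k l) (exact_inclusion_mkQuot hkl)⟩

theorem ext1Zero_quot_quot (hkl : k < l) (hl : l ≤ S.n i) (hkl' : k' < l') (hl' : l' ≤ S.n i')
    (h : i = i' → ¬ Crosses (k, l) (k', l')) :
    Ext1Zero A (S.Quot i k l) (S.Quot i' k' l') := by
  refine (ext1Zero_quot_iff hkl.le).mpr fun f => ?_
  obtain ⟨g, hgP, hg⟩ := exists_lift f
  have of_mem (hgk : ∀ x ∈ S.P i k, g x ∈ S.P i' k') : ∃ g : S.P i k →ₗ[A] S.Quot i' k' l',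
      g ∘ₗ Submodule.inclusion (S.P_antitone i hkl.le) = f :=
    ⟨S.mkQuot i' k' l' ∘ₗ g.restrict hgk, LinearMap.ext hg⟩
  by_cases hsmall : S.IsSmall g
  · exact of_mem fun x _ => hsmall.mem_P x (hkl'.trans_le hl')
  obtain rfl := eq_of_not_isSmall hsmall
  by_cases hk : k' ≤ k
  · exact of_mem fun x hx => S.P_antitone i hk ((apply_mem_P_iff hsmall).mpr hx)
  have hk'l : k' ≤ l := by
    obtain hl | rfl := hl.lt_or_eq
    · exact le_of_map_P_le hsmall hl (Submodule.map_le_iff_le_comap.mpr hgP)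
    · exact (hkl'.trans_le hl').le
  have hl'l : l' ≤ l := not_lt.mp fun hlt => h rfl ⟨not_le.mp hk, hk'l, hlt⟩
  refine ⟨0, LinearMap.ext fun x => ?_⟩
  rw [zero_comp, ← hg, LinearMap.zero_apply, eq_comm, mkQuot_eq_zero]
  exact S.P_antitone i hl'l ((apply_mem_P_iff hsmall).mpr x.2)

theorem not_crosses_of_ext1Zero (hkl : k < l) (hl' : l' ≤ S.n i)
    (h : Ext1Zero A (S.Quot i k l) (S.Quot i k' l')) : ¬ Crosses (k, l) (k', l') := by
  rintro ⟨hkk' : k < k', hk'l : k' ≤ l, hll' : l < l'⟩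
  obtain ⟨f, hf⟩ := (ext1Zero_quot_iff hkl.le).mp h
    (S.mkQuot i k' l' ∘ₗ Submodule.inclusion (S.P_antitone i hk'l))
  obtain ⟨g, hgP, hg⟩ := exists_lift f
  have hsmall : S.IsSmall g := by
    by_contra hns
    exact hkk'.not_ge (le_of_map_P_le hns (by lia) (Submodule.map_le_iff_le_comap.mpr hgP))
  have hid (x : E i) (hx : x ∈ S.P i l) : x - g x ∈ S.P i l' := by
    have hfx : f ⟨x, S.P_antitone i hkl.le hx⟩ = S.mkQuot i k' l' ⟨x, S.P_antitone i hk'l hx⟩ :=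
      congr($hf ⟨x, hx⟩)
    exact mkQuot_eq_mkQuot.mp (hfx.symm.trans (hg _).symm)
  exact hll'.not_ge (le_of_map_P_le hsmall.not_isSmall_id_sub (hll'.trans_le hl')
    (Submodule.map_le_iff_le_comap.mpr hid))

instance finite_P [IsNoetherianRing A] (i : ι) (j : ℕ) : Module.Finite A (S.P i j) :=
  have := S.finite i
  inferInstance

theorem exists_bijective_comp_of_projective [IsNoetherianRing A] (S : ProjectiveChains A E)
    {Q : Type} [AddCommGroup Q] [Module A Q] [Module.Projective A Q] [Module.Finite A Q]
    [Nontrivial Q] : ∃ i j, j < S.n i ∧ ∃ (v : S.P i j →ₗ[A] Q) (w : Q →ₗ[A] S.P i j),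
      Function.Bijective (w ∘ₗ v) := by
  obtain ⟨C, hC, -⟩ := (eq_top_or_exists_le_coatom (⊥ : Submodule A Q)).resolve_left bot_ne_top
  have hgen : ∃ i j, j < S.n i ∧ ∃ v : S.P i j →ₗ[A] Q, ¬ range v ≤ C := by
    by_contra! hcon
    exact hC.1 (eq_top_of_range_P_le hcon)
  obtain ⟨i, j, hj, v, hv⟩ := hgen
  exact ⟨i, j, hj, v, (isLocalMod_P hj).exists_bijective_comp hC hv⟩

theorem exists_extension_pi (S : ProjectiveChains A E) {α : Type} {σ : α → ι} {M : Type}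
    [AddCommGroup M] [Module A M] {N : Submodule A M} (f : N →ₗ[A] ∀ t, E (σ t)) :
    ∃ g : ∀ t, M →ₗ[A] E (σ t), ∀ x : N, pi g x = f x := by
  choose g hg using fun t => S.exists_extension (proj (φ := fun t => E (σ t)) t ∘ₗ f)
  exact ⟨g, fun x => funext fun t => congr($(hg t) x)⟩

theorem exists_map_P_le_not_isSmall [IsNoetherianRing A] {α : Type} [Finite α] {σ : α → ι}
    {Q : Submodule A (∀ t, E (σ t))} [Module.Projective A Q] (hQ : Q ≠ ⊥) :
    ∃ i l, l < S.n i ∧ ∃ g : ∀ t, E i →ₗ[A] E (σ t),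
      (S.P i l).map (pi g) ≤ Q ∧ ∃ t, ¬ S.IsSmall (g t) := by
  classical
  have := Fintype.ofFinite α
  have : ∀ t, Module.Finite A (E (σ t)) := fun t => S.finite (σ t)
  have := Submodule.nontrivial_iff_ne_bot.mpr hQ
  obtain ⟨i, l, hl, v, w, hwv⟩ := S.exists_bijective_comp_of_projective (Q := Q)
  have hv : Function.Injective v := .of_comp (f := w) hwv.injective
  obtain ⟨g, hgv⟩ := S.exists_extension_pi (Q.subtype ∘ₗ v)
  refine ⟨i, l, hl, g, ?_, ?_⟩
  · rintro _ ⟨x, hx, rfl⟩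
    exact hgv ⟨x, hx⟩ ▸ (v ⟨x, hx⟩).2
  by_contra! hsmall
  have := S.injective i
  obtain ⟨ω, hω⟩ := Module.Injective.extension_property A _ _ _ (Q.subtype ∘ₗ v)
    (Q.injective_subtype.comp hv) (S.P i l).subtype
  have hωg : S.IsSmall (ω ∘ₗ pi g) := by
    have hsum : ω ∘ₗ pi g = ∑ t, (ω ∘ₗ single A _ t) ∘ₗ g t := by
      refine LinearMap.ext fun x => ?_
      simp only [LinearMap.sum_apply, comp_apply, ← map_sum, coe_single]
      exact congrArg ω (Finset.univ_sum_single (pi g x)).symm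
    exact hsum ▸ IsSmall.sum fun t _ => (hsmall t).comp_left _
  have hbot : S.P i l ≤ ⊥ := fun x hx => by
    refine (bijective_of_not_isSmall hωg.not_isSmall_id_sub).injective ?_
    have hωv : ω ((Q.subtype ∘ₗ v) ⟨x, hx⟩) = x := congr($hω ⟨x, hx⟩)
    rw [map_zero, LinearMap.sub_apply, id_apply, comp_apply, hgv ⟨x, hx⟩, hωv, sub_self]
  exact (bot_le.trans_lt (G_succ_lt_P hl)).not_ge hbot

theorem exists_map_P_le_mem_P [IsNoetherianRing A] {α : Type} [Finite α] {σ : α → ι}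
    {Q : Submodule A (∀ t, E (σ t))} [Module.Projective A Q] (hQ : Q ≠ ⊥) :
    ∃ i l, l < S.n i ∧ ∃ g : ∀ t, E i →ₗ[A] E (σ t), (S.P i l).map (pi g) ≤ Q ∧
      (∃ t, ¬ S.IsSmall (g t)) ∧ ∀ t, ¬ S.IsSmall (g t) → ∀ q ∈ Q, q t ∈ S.P (σ t) l := by
  classical
  have hex : ∃ l i, l < S.n i ∧ ∃ g : ∀ t, E i →ₗ[A] E (σ t),
      (S.P i l).map (pi g) ≤ Q ∧ ∃ t, ¬ S.IsSmall (g t) :=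
    exists_comm.mp (exists_map_P_le_not_isSmall hQ)
  obtain ⟨i, hl, g, hgQ, t₀, ht₀⟩ := Nat.find_spec hex
  refine ⟨i, _, hl, g, hgQ, ⟨t₀, ht₀⟩, fun t ht => ?_⟩
  obtain rfl := eq_of_not_isSmall ht
  let coord : Q →ₗ[A] E (σ t) := proj t ∘ₗ Q.subtype
  have htop : (S.P (σ t) (Nat.find hex)).comap coord = ⊤ := by
    refine eq_top_of_range_P_le (S := S) fun i' l' hl' v => ?_
    obtain ⟨g', hgv⟩ := S.exists_extension_pi (Q.subtype ∘ₗ v)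
    rintro _ ⟨x, rfl⟩
    change (Q.subtype ∘ₗ v) x t ∈ S.P (σ t) (Nat.find hex)
    rw [← hgv, pi_apply]
    by_cases hsmall : S.IsSmall (g' t)
    · exact hsmall.mem_P _ hl
    · have hle : Nat.find hex ≤ l' := by
        refine Nat.find_min' hex ⟨i', hl', g', ?_, t, hsmall⟩
        rintro _ ⟨x, hx, rfl⟩
        exact hgv ⟨x, hx⟩ ▸ (v ⟨x, hx⟩).2
      exact S.P_antitone _ hle ((apply_mem_P_iff hsmall).mpr x.2)
  exact fun q hq => Submodule.eq_top_iff'.mp htop ⟨q, hq⟩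

theorem exists_pi_map_P_le [IsNoetherianRing A] {α : Type} [Finite α] {σ : α → ι} {κ : α → ℕ}
    (hκ : ∀ t, κ t < S.n (σ t)) {Q : Submodule A (∀ t, E (σ t))} [Module.Projective A Q]
    (hQ : Q ≠ ⊥) : ∃ t l, l < S.n (σ t) ∧ ∃ g : ∀ s, E (σ t) →ₗ[A] E (σ s),
      g t = LinearMap.id ∧ (S.P (σ t) l).map (pi g) ≤ Q ∧ (∀ q ∈ Q, q t ∈ S.P (σ t) l) ∧
      ∀ s, (S.P (σ t) (κ t)).map (g s) ≤ S.P (σ s) (κ s) := by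
  obtain ⟨i, l, hl, g, hgQ, ⟨t₀, ht₀⟩, hQP⟩ := exists_map_P_le_mem_P (S := S) hQ
  have : Nonempty {s // ¬ S.IsSmall (g s)} := ⟨t₀, ht₀⟩
  obtain ⟨⟨t, ht⟩, hmax⟩ := Finite.exists_max fun s : {s // ¬ S.IsSmall (g s)} => κ s
  obtain rfl := eq_of_not_isSmall ht
  let e := LinearEquiv.ofBijective (g t) (bijective_of_not_isSmall ht)
  have hge (x : E (σ t)) : g t (e.symm x) = x := e.apply_symm_apply x
  have he {j : ℕ} {x : E (σ t)} : e.symm x ∈ S.P (σ t) j ↔ x ∈ S.P (σ t) j := by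
    rw [← apply_mem_P_iff ht, hge]
  refine ⟨t, l, hl, fun s => g s ∘ₗ e.symm, LinearMap.ext hge, ?_, hQP t ht, fun s => ?_⟩
  · rintro _ ⟨x, hx, rfl⟩
    exact hgQ ⟨e.symm x, he.mpr hx, rfl⟩
  · rintro _ ⟨x, hx, rfl⟩
    change g s (e.symm x) ∈ _
    by_cases hs : S.IsSmall (g s)
    · exact hs.mem_P _ (hκ s)
    · rw [apply_mem_P_iff hs, he]
      exact S.P_antitone _ (hmax ⟨s, hs⟩) hx

section Classification

variable {α : Type} {σ : α → ι} {κ : α → ℕ} {M : Type} [AddCommGroup M] [Module A M]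

theorem exists_section_map_eq_zero [IsNoetherianRing A] [Finite α] (hκ : ∀ t, κ t < S.n (σ t))
    (p : (∀ t, S.P (σ t) (κ t)) →ₗ[A] M) [Module.Projective A (ker p)] (hp : ker p ≠ ⊥) :
    ∃ t l, l < S.n (σ t) ∧ ∃ β : S.P (σ t) (κ t) →ₗ[A] ∀ s, S.P (σ s) (κ s),
      (∀ x, β x t = x) ∧ (∀ x : S.P (σ t) (κ t), (x : E (σ t)) ∈ S.P (σ t) l → p (β x) = 0) ∧
      ∀ z, p z = 0 → (z t : E (σ t)) ∈ S.P (σ t) l := by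
  let inc : (∀ t, S.P (σ t) (κ t)) →ₗ[A] ∀ t, E (σ t) :=
    pi fun t => (S.P (σ t) (κ t)).subtype ∘ₗ proj t
  have hinc : Function.Injective inc := fun x y hxy => funext fun t => Subtype.ext congr($hxy t)
  have : Module.Projective A ((ker p).map inc) :=
    .of_equiv (Submodule.equivMapOfInjective inc hinc (ker p))
  obtain ⟨t, l, hl, g, hgt, hgQ, hQP, hgκ⟩ :=
    exists_pi_map_P_le hκ fun h => hp (Submodule.map_injective_of_injective hinc
      (h.trans (Submodule.map_bot _).symm))
  let β : S.P (σ t) (κ t) →ₗ[A] ∀ s, S.P (σ s) (κ s) :=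
    pi fun s => (g s).restrict (Submodule.map_le_iff_le_comap.mp (hgκ s))
  refine ⟨t, l, hl, β, fun x => Subtype.ext congr($hgt x), fun x hx => ?_, fun z hz => ?_⟩
  · obtain ⟨z, hz, hzx⟩ := hgQ ⟨x, hx, rfl⟩
    have hzβ : z = β x := hinc hzx
    exact hzβ ▸ hz
  · exact hQP _ ⟨z, hz, rfl⟩

theorem nonempty_quot_equiv {t : α} (ht : κ t < S.n (σ t)) (hM : IsIndecomposableMod A M)
    {p : (∀ t, S.P (σ t) (κ t)) →ₗ[A] M} (hp : Function.Surjective p) (hkl : κ t < l)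
    {β : S.P (σ t) (κ t) →ₗ[A] ∀ s, S.P (σ s) (κ s)} (hβ : ∀ x, β x t = x)
    (hβl : ∀ x : S.P (σ t) (κ t), (x : E (σ t)) ∈ S.P (σ t) l → p (β x) = 0)
    (hpl : ∀ z, p z = 0 → (z t : E (σ t)) ∈ S.P (σ t) l) :
    Nonempty (S.Quot (σ t) (κ t) l ≃ₗ[A] M) := by
  have := nontrivial_quot hkl ht
  obtain ⟨a, ha⟩ := exists_comp_eq_of_surjective (f := p ∘ₗ β)
    (mkQuot_surjective (S := S) (σ t) (κ t) l) fun x hx => hβl x (mkQuot_eq_zero.mp hx)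
  obtain ⟨b, hb⟩ := exists_comp_eq_of_surjective hp
    (f := S.mkQuot (σ t) (κ t) l ∘ₗ proj t) fun z hz => mkQuot_eq_zero.mpr (hpl z hz)
  have hba : b ∘ₗ a = LinearMap.id := by
    refine LinearMap.ext fun y => ?_
    obtain ⟨x, rfl⟩ := mkQuot_surjective (σ t) (κ t) l y
    calc b (a (S.mkQuot _ _ l x)) = b (p (β x)) := congrArg b congr($ha x)
      _ = S.mkQuot _ _ l (β x t) := congr($hb (β x))
      _ = S.mkQuot _ _ l x := by rw [hβ]
  exact hM.nonempty_equiv_of_bijective_comp (by rw [hba]; exact Function.bijective_id)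

theorem exists_nonempty_quot_equiv_of_iSup_range_eq_top [IsNoetherianRing A] [Finite α]
    (hκ : ∀ t, κ t < S.n (σ t)) (hM : IsIndecomposableMod A M) (hpd : PdLeOne A M)
    (f : ∀ t, S.P (σ t) (κ t) →ₗ[A] M) (hf : ⨆ t, range (f t) = ⊤)
    (hirr : ∀ t, ⨆ s, ⨆ (_ : s ≠ t), range (f s) ≠ ⊤) :
    ∃ i k l, k < l ∧ l ≤ S.n i ∧ Nonempty (S.Quot i k l ≃ₗ[A] M) := by
  classical
  have := Fintype.ofFinite α
  have : Module.Projective A (∀ t, S.P (σ t) (κ t)) :=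
    projective_pi fun t => projective_P _ _
  let p : (∀ t, S.P (σ t) (κ t)) →ₗ[A] M := ∑ t, f t ∘ₗ proj t
  have hpf (z : ∀ t, S.P (σ t) (κ t)) : p z = ∑ t, f t (z t) := LinearMap.sum_apply _ _ _
  have hp : Function.Surjective p := by
    rw [← range_eq_top, ← top_le_iff, ← hf]
    refine iSup_le fun t => ?_
    rintro _ ⟨x, rfl⟩
    refine ⟨Pi.single t x, ?_⟩
    rw [hpf, Finset.sum_eq_single t, Pi.single_eq_same]
    · exact fun s _ hs => by rw [Pi.single_eq_of_ne hs, map_zero]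
    · simp
  by_cases hker : ker p = ⊥
  · have := hM.1
    have : Module.Finite A M := .of_surjective p hp
    have : Module.Projective A M := .of_equiv (.ofBijective p ⟨ker_eq_bot.mp hker, hp⟩)
    obtain ⟨i, j, hj, v, w, hwv⟩ := S.exists_bijective_comp_of_projective (Q := M)
    have := (isLocalMod_P hj).nontrivial
    obtain ⟨e⟩ := hM.nonempty_equiv_of_bijective_comp hwv
    exact ⟨i, j, S.n i, hj, le_rfl, (S.nonempty_P_equiv_quot i j).map fun e' => e'.symm.trans e⟩
  have := hpd.projective_ker hp
  obtain ⟨t, l, hl, β, hβ, hβl, hpl⟩ := exists_section_map_eq_zero hκ p hker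
  obtain hκl | hκl := lt_or_ge (κ t) l
  · exact ⟨σ t, κ t, l, hκl, hl.le, nonempty_quot_equiv (hκ t) hM hp hκl hβ hβl hpl⟩
  · refine absurd (top_le_iff.mp (hf ▸ iSup_le fun s => ?_)) (hirr t)
    obtain rfl | hst := eq_or_ne s t
    · exact range_le_iSup_range_of_sum_eq_zero f hβ fun x =>
        hpf (β x) ▸ hβl x (S.P_antitone _ hκl x.2)
    · exact le_iSup₂_of_le s hst le_rfl

end Classification

theorem exists_nonempty_quot_equiv [IsNoetherianRing A] (S : ProjectiveChains A E) {M : Type}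
    [AddCommGroup M] [Module A M] [Module.Finite A M] (hM : IsIndecomposableMod A M)
    (hpd : PdLeOne A M) : ∃ i k l, k < l ∧ l ≤ S.n i ∧ Nonempty (S.Quot i k l ≃ₗ[A] M) := by
  let N (x : Σ q : {q : ι × ℕ // q.2 < S.n q.1}, (S.P q.1.1 q.1.2 →ₗ[A] M)) := range x.2
  have hN : ⨆ x, N x = ⊤ := eq_top_of_range_P_le fun i j hj f =>
    le_iSup N ⟨⟨(i, j), hj⟩, f⟩
  obtain ⟨s, hs, hirr⟩ := exists_finset_irredundant hN
  exact exists_nonempty_quot_equiv_of_iSup_range_eq_top (fun x : s => x.1.1.2) hM hpd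
    (fun x : s => x.1.2) hs hirr

variable (S) in
/-- The indices `(i, k, l)` of the nonzero subquotients `P i k / P i l`. -/
abbrev Interval : Type := {p : ι × ℕ × ℕ // p.2.1 < p.2.2 ∧ p.2.2 ≤ S.n p.1}

/-- The indecomposable module `P i k / P i l` attached to an interval. -/
abbrev Interval.X (v : S.Interval) : Type := S.Quot v.1.1 v.1.2.1 v.1.2.2

/-- The direct sum of the modules attached to a set of intervals. -/
abbrev DirectSumX (s : Set S.Interval) : Type := ∀ v : s, v.1.X

/-- A set of intervals is noncrossing if no two intervals belonging to the same chain cross. -/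
def IsNoncrossing (s : Set S.Interval) : Prop :=
  ∀ v ∈ s, ∀ w ∈ s, v.1.1 = w.1.1 → ¬ Crosses v.1.2 w.1.2

instance [Finite ι] : Finite S.Interval :=
  Finite.of_injective (β := Σ i, Fin (S.n i + 1) × Fin (S.n i + 1))
    (fun v => ⟨v.1.1, ⟨v.1.2.1, by have := v.2; lia⟩, ⟨v.1.2.2, by have := v.2; lia⟩⟩) <| by
    rintro ⟨⟨i, k, l⟩, hv⟩ ⟨⟨i', k', l'⟩, hw⟩ h
    obtain ⟨rfl, h⟩ := Sigma.mk.inj_iff.mp h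
    simpa using h

variable {s s' : Set S.Interval} {v w : S.Interval}

theorem isLocalMod_X (v : S.Interval) : IsLocalMod A v.X :=
  isLocalMod_quot v.2.1 (v.2.1.trans_le v.2.2)

theorem eq_of_X_equiv (e : v.X ≃ₗ[A] w.X) : v = w := by
  obtain ⟨hi, hk, hl⟩ := index_le_of_surjective v.2.1 (v.2.1.trans_le v.2.2) w.2.1 w.2.2
    (f := e.toLinearMap) e.surjective
  obtain ⟨-, hk', hl'⟩ := index_le_of_surjective w.2.1 (w.2.1.trans_le w.2.2) v.2.1 v.2.2
    (f := e.symm.toLinearMap) e.symm.surjective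
  exact Subtype.ext (Prod.ext hi (Prod.ext (hk'.antisymm hk) (hl'.antisymm hl)))

theorem ext1Zero_X_X_iff :
    Ext1Zero A v.X w.X ↔ (v.1.1 = w.1.1 → ¬ Crosses v.1.2 w.1.2) := by
  refine ⟨?_, ext1Zero_quot_quot v.2.1 v.2.2 w.2.1 w.2.2⟩
  obtain ⟨⟨i, k, l⟩, hv⟩ := v
  obtain ⟨⟨i', k', l'⟩, hw⟩ := w
  rintro h (rfl : i = i')
  exact not_crosses_of_ext1Zero hv.1 hw.2 h

theorem pdLeOne_directSumX [Finite s] : PdLeOne A (DirectSumX s) :=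
  PdLeOne.pi fun v => pdLeOne_quot v.1.2.1.le

theorem isBasicMod_directSumX [Finite s] : IsBasicMod A (DirectSumX s) := by
  obtain ⟨k, ⟨e⟩⟩ := Finite.exists_equiv_fin s
  exact IsBasicMod.of_pi (fun a => (isLocalMod_X (e.symm a).1).isIndecomposableMod)
    (fun a b hab => ⟨fun u => hab (e.symm.injective (Subtype.ext (eq_of_X_equiv u)))⟩)
    (LinearEquiv.piCongrLeft A (fun v : s => v.1.X) e.symm)

theorem ext1Zero_directSumX_iff [Finite s] :
    Ext1Zero A (DirectSumX s) (DirectSumX s) ↔ IsNoncrossing s := by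
  classical
  refine ⟨fun h v hv w hw => ext1Zero_X_X_iff.mp ?_, fun h => Ext1Zero.pi_left fun v =>
    Ext1Zero.pi_right fun w => ext1Zero_X_X_iff.mpr (h v v.2 w w.2)⟩
  exact (h.of_split_right _ _ (proj_comp_single_same A (fun v : s => v.1.X) ⟨w, hw⟩)).of_split_left
    _ _ (proj_comp_single_same A (fun v : s => v.1.X) ⟨v, hv⟩)

theorem inAdd_directSumX (hv : v ∈ s) : InAdd A (DirectSumX s) v.X := by
  classical
  exact InAdd.self.of_split _ _ (proj_comp_single_same A (fun v : s => v.1.X) ⟨v, hv⟩)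

theorem mem_of_inAdd_directSumX [IsNoetherianRing A] [Finite s]
    (h : InAdd A (DirectSumX s) v.X) : v ∈ s := by
  obtain ⟨k, f, g, hgf⟩ := h
  obtain ⟨_, f', g', h'⟩ := (isLocalMod_X v).exists_bijective_comp_of_pi
    (f := f) (g := g) (hgf ▸ Function.bijective_id)
  obtain ⟨w, f'', g'', h''⟩ := (isLocalMod_X v).exists_bijective_comp_of_pi h'
  have := (isLocalMod_X v).nontrivial
  obtain ⟨e⟩ := (isLocalMod_X w.1).isIndecomposableMod.nonempty_equiv_of_bijective_comp h''
  exact eq_of_X_equiv e ▸ w.2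

theorem subset_of_directSumX_equiv [IsNoetherianRing A] [Finite s']
    (e : DirectSumX s ≃ₗ[A] DirectSumX s') : s ⊆ s' := fun _ hv =>
  mem_of_inAdd_directSumX ((InAdd.self.congr e.symm).trans (inAdd_directSumX hv))

theorem exists_nonempty_directSumX_equiv [IsNoetherianRing A] (S : ProjectiveChains A E)
    {M : Type} [AddCommGroup M] [Module A M] [Module.Finite A M] (hM : IsBasicMod A M)
    (hpd : PdLeOne A M) : ∃ s : Set S.Interval, Nonempty (DirectSumX s ≃ₗ[A] M) := by
  obtain ⟨k, N, ⟨e⟩, hind, hne⟩ := hM.exists_equiv_pi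
  have hex (a : Fin k) : ∃ v : S.Interval, Nonempty (v.X ≃ₗ[A] N a) := by
    have hpd' : PdLeOne A (N a) := hpd.of_split (e.toLinearMap ∘ₗ single A (fun a => N a) a)
      (proj a ∘ₗ e.symm.toLinearMap) (LinearMap.ext fun x => by simp)
    obtain ⟨i, k, l, hkl, hl, h⟩ := S.exists_nonempty_quot_equiv (hind a) hpd'
    exact ⟨⟨(i, k, l), hkl, hl⟩, h⟩
  choose v hv using hex
  have hv_inj : Function.Injective v := fun a b hab => by
    by_contra hne'
    obtain ⟨ea⟩ := hv a
    obtain ⟨eb⟩ := hab ▸ hv b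
    exact (hne a b hne').false (ea.symm.trans eb)
  refine ⟨Set.range v, ⟨?_⟩⟩
  exact (LinearEquiv.piCongrLeft A (fun w : Set.range v => w.1.X)
    (Equiv.ofInjective v hv_inj)).symm.trans
      ((LinearEquiv.piCongrRight fun a => (hv a).some).trans e)

variable {T : Type} [AddCommGroup T] [Module A T]

/-- The map `P i k / P i l → P i k' / P i l'` induced by the inclusion `P i k ≤ P i k'`. -/
def quotMap (S : ProjectiveChains A E) (i : ι) (hk : k' ≤ k) (hl : l' ≤ l) :
    S.Quot i k l →ₗ[A] S.Quot i k' l' :=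
  Submodule.mapQ _ _ (Submodule.inclusion (S.P_antitone i hk)) fun _ hx => S.P_antitone i hl hx

theorem subsingleton_quot_self : Subsingleton (S.Quot i k k) :=
  Submodule.Quotient.subsingleton_iff.mpr (Submodule.submoduleOf_self _)

theorem prod_quotMap_injective (hk : k' ≤ k) (hl : l' ≤ l) :
    Function.Injective ((S.quotMap i le_rfl hl).prod (S.quotMap i hk le_rfl) :
      S.Quot i k l →ₗ[A] S.Quot i k l' × S.Quot i k' l) := by
  refine (injective_iff_map_eq_zero _).mpr fun x hx => ?_
  obtain ⟨x, rfl⟩ := mkQuot_surjective i k l x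
  have hxl := mkQuot_eq_zero (x := Submodule.inclusion (S.P_antitone i hk) x).mp
    (congrArg Prod.snd hx)
  exact mkQuot_eq_zero.mpr hxl

theorem exact_prod_quotMap (hk : k' ≤ k) (hkl : k ≤ l') (hl : l' ≤ l) :
    Function.Exact ((S.quotMap i le_rfl hl).prod (S.quotMap i hk le_rfl) :
      S.Quot i k l →ₗ[A] S.Quot i k l' × S.Quot i k' l)
      ((S.quotMap i hk le_rfl).coprod (-S.quotMap i le_rfl hl) :
      S.Quot i k l' × S.Quot i k' l →ₗ[A] S.Quot i k' l') := by
  rintro ⟨x, y⟩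
  obtain ⟨x, rfl⟩ := mkQuot_surjective i k l' x
  obtain ⟨y, rfl⟩ := mkQuot_surjective i k' l y
  constructor
  · intro h
    have hxy : (x : E i) - y ∈ S.P i l' := by
      rw [coprod_apply, LinearMap.neg_apply, ← sub_eq_add_neg, sub_eq_zero] at h
      exact mkQuot_eq_mkQuot.mp h
    have hy : (y : E i) ∈ S.P i k := by
      simpa using (S.P i k).sub_mem x.2 (S.P_antitone i hkl hxy)
    refine ⟨S.mkQuot i k l ⟨y, hy⟩, Prod.ext (mkQuot_eq_mkQuot.mpr ?_) rfl⟩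
    simpa using (S.P i l').neg_mem hxy
  · rintro ⟨z, hz⟩
    obtain ⟨z, rfl⟩ := mkQuot_surjective i k l z
    rw [← hz]
    exact add_neg_cancel (S.mkQuot i k' l' (Submodule.inclusion (S.P_antitone i hk) z))

theorem hasAddCoresolution_quot_of_le (hk : k' ≤ k) (hkl : k ≤ l') (hl : l' ≤ l)
    (h : HasAddCoresolution A T (S.Quot i k l')) (hkl' : InAdd A T (S.Quot i k' l))
    (hk'l' : InAdd A T (S.Quot i k' l')) (hT : Ext1Zero A T (S.Quot i k' l')) :
    HasAddCoresolution A T (S.Quot i k l) := by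
  refine h.of_pullback hkl' hk'l' hT (fun x => ?_)
    (prod_quotMap_injective hk hl) (exact_prod_quotMap hk hkl hl)
  obtain ⟨x, rfl⟩ := mkQuot_surjective i k' l' x
  exact ⟨S.mkQuot i k' l x, rfl⟩

theorem hasAddCoresolution_quot_of_treeIntervals {t : BinaryTree Unit} {a : ℕ}
    (hT : ∀ p ∈ treeIntervals t a, InAdd A T (S.Quot i p.1 p.2) ∧ Ext1Zero A T (S.Quot i p.1 p.2))
    (haj : a ≤ j) (hj : j ≤ a + t.numNodes) :
    HasAddCoresolution A T (S.Quot i j (a + t.numNodes)) := by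
  induction t generalizing a with
  | nil =>
    obtain rfl : j = a := hj.antisymm haj
    have : Subsingleton (S.Quot i j (j + (BinaryTree.nil (α := Unit)).numNodes)) :=
      subsingleton_quot_self
    exact .of_inAdd .of_subsingleton
  | node u l r ihl ihr =>
    have hTl (p) (hp : p ∈ treeIntervals l a) := hT p (mem_treeIntervals_node.mpr (.inr (.inl hp)))
    have hTr (p) (hp : p ∈ treeIntervals r (a + l.numNodes + 1)) :=
      hT p (mem_treeIntervals_node.mpr (.inr (.inr hp)))
    rw [BinaryTree.numNodes] at hj ⊢
    by_cases hjl : j ≤ a + l.numNodes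
    · obtain ⟨hl, hl'⟩ : InAdd A T (S.Quot i a (a + l.numNodes)) ∧
          Ext1Zero A T (S.Quot i a (a + l.numNodes)) := by
        rcases Nat.eq_zero_or_pos l.numNodes with h | h
        · rw [h]
          have : Subsingleton (S.Quot i a (a + 0)) := subsingleton_quot_self
          exact ⟨.of_subsingleton, .of_subsingleton_right⟩
        · exact hTl _ (root_mem_treeIntervals h)
      exact hasAddCoresolution_quot_of_le haj hjl (by lia) (ihl hTl haj hjl)
        (hT _ (mem_treeIntervals_node.mpr (.inl rfl))).1 hl hl'
    · have := ihr hTr (not_le.mp hjl) (by lia)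
      rwa [show a + l.numNodes + 1 + r.numNodes = a + (l.numNodes + r.numNodes + 1) by lia] at this

variable (S) in
/-- A binary tree with `n i` nodes for each chain `G i 0 > ⋯ > G i (n i)`. -/
abbrev TreeFamily : Type := ∀ i, BinaryTree.treesOfNumNodesEq (S.n i)

namespace TreeFamily

/-- The intervals attached to a family of trees, the `i`-th tree being labelled by
`0, …, n i - 1`. -/
def intervals (t : S.TreeFamily) : Set S.Interval := {v | v.1.2 ∈ treeIntervals (t v.1.1) 0}

theorem numNodes_eq (t : S.TreeFamily) (i : ι) : (t i : BinaryTree Unit).numNodes = S.n i :=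
  BinaryTree.mem_treesOfNumNodesEq.mp (t i).2

theorem exists_mem_intervals_iff {t : S.TreeFamily} {p : ℕ × ℕ} :
    (∃ v ∈ t.intervals, v.1 = (i, p)) ↔ p ∈ treeIntervals (t i) 0 := by
  refine ⟨fun ⟨v, hv, hvp⟩ => ?_, fun hp => ?_⟩
  · rwa [intervals, Set.mem_ofPred_eq, hvp] at hv
  · obtain ⟨-, hp₁, hp₂⟩ := bounds_of_mem_treeIntervals hp
    rw [zero_add, numNodes_eq] at hp₂
    exact ⟨⟨(i, p), hp₁, hp₂⟩, hp, rfl⟩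

theorem isNoncrossing_intervals (t : S.TreeFamily) : IsNoncrossing t.intervals := by
  rintro v hv w hw h
  rw [intervals, Set.mem_ofPred_eq, ← h] at hw
  exact not_crosses_of_mem_treeIntervals hv hw

theorem intervals_injective : Function.Injective (intervals : S.TreeFamily → _) :=
  fun t t' h => funext fun i => Subtype.ext <|
    eq_of_treeIntervals_eq ((t.numNodes_eq i).trans (t'.numNodes_eq i).symm) <|
      Finset.ext fun p => by rw [← exists_mem_intervals_iff, h, exists_mem_intervals_iff]

theorem exists_subset_intervals {s : Set S.Interval} (hs : IsNoncrossing s) :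
    ∃ t : S.TreeFamily, s ⊆ t.intervals := by
  choose t ht hst using fun i => exists_treeIntervals_superset (n := S.n i) (a := 0)
    (I := {p | ∃ v ∈ s, v.1 = (i, p)})
    (by
      rintro p ⟨⟨_, hv⟩, -, rfl⟩
      exact ⟨Nat.zero_le _, hv.1, hv.2.trans_eq (zero_add _).symm⟩)
    (by
      rintro p ⟨v, hv, hvp⟩ q ⟨w, hw, hwq⟩
      simpa only [hvp, hwq, true_imp_iff] using hs v hv w hw)
  exact ⟨fun i => ⟨t i, BinaryTree.mem_treesOfNumNodesEq.mpr (ht i)⟩,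
    fun v hv => hst v.1.1 v.1.2 ⟨v, hv, rfl⟩⟩

theorem hasAddCoresolution_P [Finite ι] (t : S.TreeFamily) (hj : j < S.n i) :
    HasAddCoresolution A (DirectSumX t.intervals) (S.P i j) := by
  obtain ⟨e⟩ := S.nonempty_P_equiv_quot i j
  refine HasAddCoresolution.congr_right ?_ e.symm
  have h := hasAddCoresolution_quot_of_treeIntervals (S := S) (i := i) (j := j) (a := 0)
    (t := t i) (T := DirectSumX t.intervals) (fun p hp => ?_) (Nat.zero_le j)
    (by rw [t.numNodes_eq]; lia)
  · rwa [t.numNodes_eq, zero_add] at h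
  · obtain ⟨⟨_, h⟩, hv, rfl⟩ := exists_mem_intervals_iff.mpr hp
    exact ⟨inAdd_directSumX hv, Ext1Zero.pi_left fun w =>
      ext1Zero_X_X_iff.mpr (t.isNoncrossing_intervals _ w.2 _ hv)⟩

end TreeFamily

theorem eq_intervals_of_hasAddCoresolution [Finite ι] [IsNoetherianRing A] {s : Set S.Interval}
    {t : S.TreeFamily} (hst : s ⊆ t.intervals)
    (hc : HasAddCoresolution A (DirectSumX s) A) : s = t.intervals := by
  have hnc {v w} (hv : v ∈ t.intervals) (hw : w ∈ t.intervals) : Ext1Zero A v.X w.X :=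
    ext1Zero_X_X_iff.mpr (t.isNoncrossing_intervals v hv w hw)
  refine hst.antisymm fun v hv => mem_of_inAdd_directSumX ?_
  exact InAdd.of_ext1Zero (ext1Zero_directSumX_iff.mpr fun v hv w hw =>
      t.isNoncrossing_intervals v (hst hv) w (hst hw))
    hc (pdLeOne_quot v.2.1.le) (Ext1Zero.pi_right fun w => hnc hv (hst w.2))
    (Ext1Zero.pi_left fun w => hnc (hst w.2) hv)

theorem exists_treeFamily_of_tilting [Finite ι] [IsNoetherianRing A] (S : ProjectiveChains A E)
    {M : Type} [AddCommGroup M] [Module A M] [Module.Finite A M] (hM : IsBasicMod A M)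
    (hpd : PdLeOne A M) (hext : Ext1Zero A M M) (hc : HasAddCoresolution A M A) :
    ∃ t : S.TreeFamily, Nonempty (DirectSumX t.intervals ≃ₗ[A] M) := by
  obtain ⟨s, ⟨e⟩⟩ := S.exists_nonempty_directSumX_equiv hM hpd
  have hs : IsNoncrossing s := ext1Zero_directSumX_iff.mp <|
    (hext.of_split_left _ _ e.symm_comp).of_split_right _ _ e.symm_comp
  obtain ⟨t, hst⟩ := TreeFamily.exists_subset_intervals hs
  exact ⟨t, eq_intervals_of_hasAddCoresolution hst (hc.congr_left e.symm) ▸ ⟨e⟩⟩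

theorem card_treeFamily [Fintype ι] (S : ProjectiveChains A E) :
    Nat.card S.TreeFamily = ∏ i, (2 * S.n i).choose (S.n i) / (S.n i + 1) := by
  rw [Nat.card_pi]
  refine Finset.prod_congr rfl fun i _ => ?_
  rw [Nat.card_eq_fintype_card, Fintype.card_coe, BinaryTree.treesOfNumNodesEq_card_eq_catalan,
    catalan_eq_centralBinom_div, Nat.centralBinom_eq_two_mul_choose]

end ProjectiveChains

section Radical

open LinearMap

variable {A M M' : Type} [Ring A] [AddCommGroup M] [Module A M] [AddCommGroup M'] [Module A M']

theorem radSub_map_of_injective {f : M →ₗ[A] M'} (hf : Function.Injective f)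
    (N : Submodule A M) : radSub (N.map f) = (radSub N).map f := by
  have h := Module.map_jacobson_of_bijective (N.equivMapOfInjective f hf).bijective
  rw [radSub, ← Module.jacobson, ← h, radSub, ← Submodule.map_comp, ← Submodule.map_comp]
  rfl

theorem radSub_iterate_map_of_injective {f : M →ₗ[A] M'} (hf : Function.Injective f)
    (j : ℕ) (N : Submodule A M) : radSub^[j] (N.map f) = (radSub^[j] N).map f :=
  ((show Function.Semiconj (Submodule.map f) radSub radSub from
    fun N => (radSub_map_of_injective hf N).symm).iterate_right j N).symm

theorem nonempty_radSub_equiv {N : Submodule A M} {N' : Submodule A M'} (e : N ≃ₗ[A] N') :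
    Nonempty (radSub N ≃ₗ[A] radSub N') := by
  have hN' : (⊤ : Submodule A N).map (N'.subtype ∘ₗ e.toLinearMap) = N' := by
    rw [Submodule.map_top, range_comp, e.range, Submodule.map_top, N'.range_subtype]
  have hinj : Function.Injective (N'.subtype ∘ₗ e.toLinearMap) :=
    Subtype.val_injective.comp e.injective
  have h : radSub N = (radSub ⊤).map N.subtype := by
    rw [← radSub_map_of_injective N.injective_subtype, Submodule.map_top, N.range_subtype]
  have h' : radSub N' = (radSub ⊤).map (N'.subtype ∘ₗ e.toLinearMap) := by
    rw [← radSub_map_of_injective hinj, hN']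
  rw [h, h']
  exact ⟨(Submodule.equivMapOfInjective _ N.injective_subtype _).symm.trans
    (Submodule.equivMapOfInjective _ hinj _)⟩

theorem radSub_lt (N : Submodule A M) [Module.Finite A N] [Nontrivial N] : radSub N < N := by
  have h := (Submodule.map_strictMono_of_injective N.injective_subtype)
    (Module.jacobson_lt_top A N)
  rwa [Submodule.map_top, N.range_subtype] at h

theorem IsIndecomposableMod.le_radSub_of_lt [IsArtinianRing A] {N N' : Submodule A M}
    [Module.Finite A N] [Module.Projective A N] (hN : IsIndecomposableMod A N) (h : N' < N) :
    N' ≤ radSub N := by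
  rw [← inf_eq_right.mpr h.le, ← Submodule.map_comap_subtype]
  exact Submodule.map_mono <| hN.le_jacobson fun htop =>
    h.not_ge (Submodule.submoduleOf_eq_top.mp htop)

end Radical

theorem exists_eq_or_le_of_forall_lt_imp_le_succ {α : Type*} [PartialOrder α] {G : ℕ → α} {n : ℕ}
    {a : α} (h₀ : a ≤ G 0) (h : ∀ j < n, a < G j → a ≤ G (j + 1)) :
    (∃ j < n, a = G j) ∨ a ≤ G n := by
  induction n with
  | zero => exact .inr h₀
  | succ n ih =>
    rcases ih fun j hj => h j (Nat.lt_succ_of_lt hj) with ⟨j, hj, rfl⟩ | hle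
    · exact .inl ⟨j, Nat.lt_succ_of_lt hj, rfl⟩
    · rcases hle.eq_or_lt with rfl | hlt
      · exact .inl ⟨n, n.lt_succ_self, rfl⟩
      · exact .inr (h n n.lt_succ_self hlt)

section RightIdeal

open LinearMap

variable {e : R}

theorem mem_rightIdeal_iff_mul_eq (he : IsIdempotentElem e) {x : R} :
    x ∈ rightIdeal R e ↔ e * x = x := by
  rw [rightIdeal, Submodule.mem_span_singleton]
  constructor
  · rintro ⟨a, rfl⟩
    rw [← op_unop a, op_smul_eq_mul, ← mul_assoc, he.eq]
  · exact fun h => ⟨op x, h⟩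

instance finite_rightIdeal : Module.Finite Rᵐᵒᵖ (rightIdeal R e) :=
  Module.Finite.span_singleton Rᵐᵒᵖ e

/-- Left multiplication by `e`, as a map of right modules from `R` onto the right ideal `eR`. -/
def mulLeftRightIdeal (e : R) : R →ₗ[Rᵐᵒᵖ] rightIdeal R e :=
  (mulLeft Rᵐᵒᵖ e).codRestrict _ fun x => Submodule.mem_span_singleton.mpr ⟨op x, rfl⟩

theorem mulLeftRightIdeal_comp_subtype (he : IsIdempotentElem e) :
    mulLeftRightIdeal e ∘ₗ (rightIdeal R e).subtype = LinearMap.id :=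
  LinearMap.ext fun x => Subtype.ext ((mem_rightIdeal_iff_mul_eq he).mp x.2)

theorem projective_rightIdeal (he : IsIdempotentElem e) :
    Module.Projective Rᵐᵒᵖ (rightIdeal R e) :=
  have : Module.Projective Rᵐᵒᵖ R := .of_equiv (opLinearEquiv (M := R) Rᵐᵒᵖ).symm
  .of_split _ _ (mulLeftRightIdeal_comp_subtype he)

theorem nonempty_linearEquiv_pi_rightIdeal {I : Type} [Fintype I] {e : I → R}
    (he : CompleteOrthogonalIdempotents e) :
    Nonempty (R ≃ₗ[Rᵐᵒᵖ] ∀ p, rightIdeal R (e p)) := by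
  refine ⟨.ofBijective (pi fun p => mulLeftRightIdeal (e p)) ⟨fun x y hxy => ?_, fun x => ?_⟩⟩
  · have h (p : I) : e p * x = e p * y := congrArg Subtype.val (congrFun hxy p)
    rw [← one_mul x, ← one_mul y, ← he.complete, Finset.sum_mul, Finset.sum_mul]
    exact Finset.sum_congr rfl fun p _ => h p
  · have hx (p : I) : e p * x p = x p := (mem_rightIdeal_iff_mul_eq (he.idem p)).mp (x p).2
    refine ⟨∑ p, (x p : R), funext fun p => Subtype.ext ?_⟩
    change e p * ∑ q, (x q : R) = x p
    rw [Finset.mul_sum, Finset.sum_eq_single_of_mem p (Finset.mem_univ p), hx]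
    intro q _ hqp
    rw [← hx q, ← mul_assoc, he.ortho hqp.symm, zero_mul]

theorem eq_top_of_forall_range_rightIdeal_le {I : Type} [Fintype I] {e : I → R}
    (he : ∑ p, e p = 1) {M : Type} [AddCommGroup M] [Module Rᵐᵒᵖ M] {N : Submodule Rᵐᵒᵖ M}
    (h : ∀ p, ∀ f : rightIdeal R (e p) →ₗ[Rᵐᵒᵖ] M, range f ≤ N) : N = ⊤ := by
  refine eq_top_iff.mpr fun x _ => ?_
  have hx : ∑ p, op (e p) • x = x := by
    rw [← Finset.sum_smul, ← Finset.op_sum, he, op_one, one_smul]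
  rw [← hx]
  exact N.sum_mem fun p _ => h p (toSpanSingleton Rᵐᵒᵖ M x ∘ₗ
    (opLinearEquiv (M := R) Rᵐᵒᵖ).toLinearMap ∘ₗ (rightIdeal R (e p)).subtype)
    ⟨⟨e p, Submodule.mem_span_singleton_self _⟩, rfl⟩

end RightIdeal

/-- The isomorphism classes of basic tilting right `R`-modules. -/
abbrev BasicTiltingClass (R : Type) [Ring R] : Type 1 :=
  Quotient (isoSetoid Rᵐᵒᵖ fun M => IsTiltingRight R M ∧ IsBasicMod Rᵐᵒᵖ M)

namespace HaradaData

open LinearMap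

variable (H : HaradaData R) {i k : Fin H.m} {j : ℕ}

theorem completeOrthogonalIdempotents :
    CompleteOrthogonalIdempotents fun p : Σ i : Fin H.m, Fin (H.n i) => H.e p.1 p.2 :=
  ⟨⟨fun p => H.idem p.1 p.2, fun p q => H.orth p q⟩, H.sum_eq_one⟩

/-- The injective projective module `e_{i1}R`. -/
abbrev InjProj (i : Fin H.m) : Type := rightIdeal R (H.e i ⟨0, H.hn i⟩)

/-- The radical filtration of `e_{i1}R`. -/
def radChain (i : Fin H.m) (j : ℕ) : Submodule Rᵐᵒᵖ (H.InjProj i) := radSub^[j] ⊤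

theorem radChain_succ (i : Fin H.m) (j : ℕ) : H.radChain i (j + 1) = radSub (H.radChain i j) :=
  Function.iterate_succ_apply' _ _ _

theorem nonempty_radChain_equiv (i : Fin H.m) {j : ℕ} (hj : j < H.n i) :
    Nonempty (H.radChain i j ≃ₗ[Rᵐᵒᵖ] rightIdeal R (H.e i ⟨j, hj⟩)) := by
  induction j with
  | zero => exact ⟨Submodule.topEquiv⟩
  | succ j ih =>
    obtain ⟨e⟩ := ih (Nat.lt_of_succ_lt hj)
    obtain ⟨e'⟩ := H.rad_iso i ⟨j + 1, hj⟩ j.succ_pos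
    obtain ⟨e''⟩ := nonempty_radSub_equiv e
    exact ⟨(LinearEquiv.ofEq _ _ (H.radChain_succ i j)).trans (e''.trans e'.symm)⟩

variable {H}

theorem isIndecomposableMod_radChain (hj : j < H.n i) :
    IsIndecomposableMod Rᵐᵒᵖ (H.radChain i j) := by
  obtain ⟨e⟩ := H.nonempty_radChain_equiv i hj
  exact (H.indec i ⟨j, hj⟩).congr e.symm

theorem projective_radChain (hj : j < H.n i) : Module.Projective Rᵐᵒᵖ (H.radChain i j) := by
  obtain ⟨e⟩ := H.nonempty_radChain_equiv i hj
  have := projective_rightIdeal (H.idem i ⟨j, hj⟩)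
  exact .of_equiv e.symm

theorem finite_radChain (hj : j < H.n i) : Module.Finite Rᵐᵒᵖ (H.radChain i j) := by
  obtain ⟨e⟩ := H.nonempty_radChain_equiv i hj
  exact .equiv e.symm

theorem radChain_succ_lt (hj : j < H.n i) : H.radChain i (j + 1) < H.radChain i j := by
  have := finite_radChain hj
  have := (isIndecomposableMod_radChain hj).1
  exact H.radChain_succ i j ▸ radSub_lt _

theorem le_radChain_succ_of_lt [IsArtinianRing Rᵐᵒᵖ] (hj : j < H.n i)
    {N : Submodule Rᵐᵒᵖ (H.InjProj i)} (hN : N < H.radChain i j) : N ≤ H.radChain i (j + 1) := by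
  have := finite_radChain hj
  have := projective_radChain hj
  exact H.radChain_succ i j ▸ (isIndecomposableMod_radChain hj).le_radSub_of_lt hN

theorem eq_of_range_eq_radChain (hj : j < H.n k) {f : H.InjProj i →ₗ[Rᵐᵒᵖ] H.InjProj k}
    (hf : range f = H.radChain k j) : i = k ∧ j = 0 := by
  have := projective_radChain hj
  have := (isIndecomposableMod_radChain hj).1
  let q : H.InjProj i →ₗ[Rᵐᵒᵖ] H.radChain k j := LinearEquiv.ofEq _ _ hf ∘ₗ f.rangeRestrict
  obtain ⟨g, hg⟩ := Module.projective_lifting_property q LinearMap.id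
    ((LinearEquiv.ofEq _ _ hf).surjective.comp f.surjective_rangeRestrict)
  obtain ⟨e⟩ := (H.indec i ⟨0, H.hn i⟩).nonempty_equiv_of_bijective_comp (X := H.radChain k j)
    (a := g) (b := q) (hg ▸ Function.bijective_id)
  obtain ⟨e'⟩ := H.nonempty_radChain_equiv k hj
  by_contra hne
  refine (H.basic ⟨i, ⟨0, H.hn i⟩⟩ ⟨k, ⟨j, hj⟩⟩ fun h => hne ?_).false (e.symm.trans e')
  obtain ⟨rfl, h⟩ := Sigma.mk.inj_iff.mp h
  exact ⟨rfl, (Fin.mk.inj (eq_of_heq h)).symm⟩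

theorem range_le_radChain_or_bijective [IsArtinianRing Rᵐᵒᵖ]
    (f : H.InjProj i →ₗ[Rᵐᵒᵖ] H.InjProj k) : range f ≤ H.radChain k (H.n k) ∨
      i = k ∧ Function.Bijective f ∧ ∀ j, (H.radChain i j).map f = H.radChain k j := by
  refine (exists_eq_or_le_of_forall_lt_imp_le_succ (G := H.radChain k) le_top
    fun j hj => le_radChain_succ_of_lt hj).symm.imp_right ?_
  rintro ⟨j, hj, hf⟩
  obtain ⟨rfl, rfl⟩ := eq_of_range_eq_radChain hj hf
  have hsurj : Function.Surjective f := range_eq_top.mp hf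
  have hinj := IsNoetherian.injective_of_surjective_endomorphism f hsurj
  refine ⟨rfl, ⟨hinj, hsurj⟩, fun j => ?_⟩
  rw [radChain, ← radSub_iterate_map_of_injective hinj, Submodule.map_top, range_eq_top.mpr hsurj]

variable (H) in
/-- The radical chains of the injective projectives `e_{i1}R`. -/
def projectiveChains [IsArtinianRing Rᵐᵒᵖ] : ProjectiveChains Rᵐᵒᵖ H.InjProj where
  n := H.n
  n_pos := H.hn
  G := H.radChain
  succ_lt _ _ := radChain_succ_lt
  le_succ_of_lt _ _ hj _ := le_radChain_succ_of_lt hj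
  projective _ _ := projective_radChain
  finite _ := inferInstance
  injective := H.inj
  range_le_or_bijective _ _ := range_le_radChain_or_bijective
  eq_top_of_range_le M _ _ N h := eq_top_of_forall_range_rightIdeal_le H.sum_eq_one fun p f => by
    obtain ⟨e⟩ := H.nonempty_radChain_equiv p.1 p.2.2
    have h := h p.1 p.2 p.2.2 (f ∘ₗ e.toLinearMap)
    rwa [range_comp_of_range_eq_top _ e.range] at h

theorem isTiltingRight_directSumX [IsArtinianRing Rᵐᵒᵖ] (t : H.projectiveChains.TreeFamily) :
    IsTiltingRight R (ProjectiveChains.DirectSumX t.intervals) := by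
  refine ⟨inferInstance, ProjectiveChains.pdLeOne_directSumX,
    ProjectiveChains.ext1Zero_directSumX_iff.mpr t.isNoncrossing_intervals, ?_⟩
  obtain ⟨e⟩ := nonempty_linearEquiv_pi_rightIdeal H.completeOrthogonalIdempotents
  refine HasAddCoresolution.congr_right (HasAddCoresolution.pi fun p => ?_) e.symm
  obtain ⟨e'⟩ := H.nonempty_radChain_equiv p.1 p.2.2
  have h := (t.hasAddCoresolution_P (i := p.1) (j := p.2) p.2.2)
  rw [ProjectiveChains.P_of_lt p.2.2] at h
  exact h.congr_right e'

theorem exists_treeFamily_of_isTiltingRight [IsArtinianRing Rᵐᵒᵖ] (H : HaradaData R) {T : Type}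
    [AddCommGroup T] [Module Rᵐᵒᵖ T] (hT : IsTiltingRight R T) (hb : IsBasicMod Rᵐᵒᵖ T) :
    ∃ t : H.projectiveChains.TreeFamily,
      Nonempty (ProjectiveChains.DirectSumX t.intervals ≃ₗ[Rᵐᵒᵖ] T) := by
  obtain ⟨hfin, hpd, hext, hc⟩ := hT
  exact H.projectiveChains.exists_treeFamily_of_tilting hb hpd hext
    (HasAddCoresolution.congr_right hc (opLinearEquiv (M := R) Rᵐᵒᵖ))

variable (H) in
/-- The basic tilting module attached to a family of binary trees. -/
def tiltingClass [IsArtinianRing Rᵐᵒᵖ] (t : H.projectiveChains.TreeFamily) :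
    BasicTiltingClass R :=
  Quotient.mk _ ⟨ModuleCat.of Rᵐᵒᵖ (ProjectiveChains.DirectSumX t.intervals),
    isTiltingRight_directSumX t, ProjectiveChains.isBasicMod_directSumX⟩

theorem tiltingClass_bijective [IsArtinianRing Rᵐᵒᵖ] : Function.Bijective H.tiltingClass := by
  refine ⟨fun t t' h => ?_, fun q => ?_⟩
  · obtain ⟨e⟩ := Quotient.exact h
    exact ProjectiveChains.TreeFamily.intervals_injective
      ((ProjectiveChains.subset_of_directSumX_equiv e).antisymm
        (ProjectiveChains.subset_of_directSumX_equiv e.symm))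
  · obtain ⟨⟨M, hM, hb⟩, rfl⟩ := Quotient.exists_rep q
    obtain ⟨t, e⟩ := H.exists_treeFamily_of_isTiltingRight hM hb
    exact ⟨t, Quotient.sound e⟩

end HaradaData

theorem statement1_general (R : Type) [Ring R] [IsArtinianRing Rᵐᵒᵖ] (H : HaradaData R) :
    Finite (Quotient (isoSetoid Rᵐᵒᵖ
        fun M => IsTiltingRight R ↥M ∧ IsBasicMod Rᵐᵒᵖ ↥M)) ∧
    Nat.card (Quotient (isoSetoid Rᵐᵒᵖ
        fun M => IsTiltingRight R ↥M ∧ IsBasicMod Rᵐᵒᵖ ↥M))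
      = ∏ i : Fin H.m, (2 * H.n i).choose (H.n i) / (H.n i + 1) := by
  let e := Equiv.ofBijective H.tiltingClass H.tiltingClass_bijective
  exact ⟨.of_equiv _ e, (Nat.card_congr e).symm.trans H.projectiveChains.card_treeFamily⟩

/-- Corollary 1.5.  The number of isomorphism classes of basic tilting right
modules over a basic left Harada algebra is finite and equals
`∏_{i=1}^m (1/(n_i+1))·binom(2 n_i, n_i)`, the product of Catalan numbers. -/
theorem statement1 (K R : Type) [Field K] [IsAlgClosed K] [Ring R] [Algebra K R]
    [FiniteDimensional K R] (H : HaradaData R) :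
    Finite (Quotient (isoSetoid Rᵐᵒᵖ
        fun M => IsTiltingRight R ↥M ∧ IsBasicMod Rᵐᵒᵖ ↥M)) ∧
    Nat.card (Quotient (isoSetoid Rᵐᵒᵖ
        fun M => IsTiltingRight R ↥M ∧ IsBasicMod Rᵐᵒᵖ ↥M))
      = ∏ i : Fin H.m, (2 * H.n i).choose (H.n i) / (H.n i + 1) :=
  have : IsArtinianRing Rᵐᵒᵖ := .of_finite K Rᵐᵒᵖ
  statement1_general R H
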